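/- arXiv:2402.07809 — 10 statements merged into one kernel-verified Lean document; each statement's English description precedes it below -/
import Mathlib

section
/- For all K, L ∈ ℕ, lim_{n→∞} | Σ_{p,q=0}^{n} a_{n,p,q}² (p/n)^{2K} (q/n)^{2L} − (1/(π² n^{2(K+L)})) ∫_{[0,2π]²} (∂_x^K ∂_y^L h_n(x,y))² dx dy | = 0. -/
open Real MeasureTheory Finset Filter

/-- The mixed partial derivative `∂_x^K ∂_y^L g` of a two-variable function, at `(x, y)`. -/
noncomputable def mixedPartial (K L : ℕ) (g : ℝ → ℝ → ℝ) (x y : ℝ) : ℝ :=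
  iteratedDeriv K (fun x' => iteratedDeriv L (g x') y) x

/-- `h_n(x,y) = T_n((cos x + cos y)/2)`. -/
noncomputable def hFun (n : ℕ) (x y : ℝ) : ℝ :=
  (Polynomial.Chebyshev.T ℝ n).eval ((Real.cos x + Real.cos y) / 2)


theorem iterD {ι : Type*} (S : Finset ι) (c m : ι → ℝ) (K : ℕ) :
    iteratedDeriv K (fun x => ∑ i ∈ S, c i * cos (m i * x)) =
      fun x => ∑ i ∈ S, c i * (m i ^ K * cos (m i * x + K * (π / 2))) := by
  induction K with
  | zero => simp
  | succ K ih =>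
    rw [iteratedDeriv_succ, ih]
    funext x
    apply HasDerivAt.deriv
    apply HasDerivAt.fun_sum
    intro i _
    have h1 : HasDerivAt (fun x : ℝ => m i * x + K * (π / 2)) (m i) x := by
      simpa using ((hasDerivAt_id x).const_mul (m i)).add_const (K * (π / 2))
    have h2 := ((h1.cos).const_mul (m i ^ K)).const_mul (c i)
    have : m i * x + ((K + 1 : ℕ) : ℝ) * (π / 2) = (m i * x + K * (π / 2)) + π / 2 := by
      push_cast; ring
    rw [this, cos_add_pi_div_two]
    refine h2.congr_deriv ?_
    ring

theorem intcos (m : ℤ) (hm : m ≠ 0) (b : ℝ) :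
    ∫ x in (0:ℝ)..(2 * π), cos (m * x + b) = 0 := by
  have hm' : (m : ℝ) ≠ 0 := by exact_mod_cast hm
  rw [intervalIntegral.integral_comp_mul_add (fun x => cos x) hm', integral_cos]
  have : (m : ℝ) * (2 * π) + b = b + m * (2 * π) := by ring
  rw [this, sin_add_int_mul_two_pi]
  simp

noncomputable def phi (K p : ℕ) (x : ℝ) : ℝ := (p : ℝ) ^ K * cos (p * x + K * (π / 2))

theorem phi_cont (K p : ℕ) : Continuous (phi K p) := by
  unfold phi; fun_prop

theorem phi_orth (K p r : ℕ) :
    ∫ x in (0:ℝ)..(2 * π), phi K p x * phi K r x =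
      if p = r then π * (p : ℝ) ^ (2 * K) * (if p = 0 then 2 else 1) else 0 := by
  have key : ∀ x, phi K p x * phi K r x = ((p : ℝ) ^ K * (r : ℝ) ^ K / 2) *
      (cos (((p - r : ℤ) : ℝ) * x + 0) + cos (((p + r : ℤ) : ℝ) * x + 2 * (K * (π / 2)))) := by
    intro x
    have e1 : ((p - r : ℤ) : ℝ) * x + 0 = (p * x + K * (π / 2)) - (r * x + K * (π / 2)) := by
      push_cast; ring
    have e2 : ((p + r : ℤ) : ℝ) * x + 2 * (K * (π / 2)) =
      (p * x + K * (π / 2)) + (r * x + K * (π / 2)) := by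
      push_cast; ring
    rw [e1, e2, cos_sub (p * x + K * (π / 2)), cos_add (p * x + K * (π / 2))]
    unfold phi
    ring
  simp_rw [key]
  rw [intervalIntegral.integral_const_mul, intervalIntegral.integral_add
    (Continuous.intervalIntegrable (by fun_prop) _ _)
    (Continuous.intervalIntegrable (by fun_prop) _ _)]
  by_cases h : p = r
  · subst h
    by_cases hp : p = 0
    · subst hp
      rcases Nat.eq_zero_or_pos K with hK | hK
      · subst hK; simp; ring
      · simp [hK.ne']
    · rw [intcos (p + p) (by omega)]
      simp [hp]; ring
  · rw [intcos (p - r) (by omega), intcos (p + r) (by omega)]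
    simp [h]

theorem mixed (n : ℕ) (a : ℕ → ℕ → ℝ)
    (ha : ∀ (x y : ℝ), hFun n x y =
        ∑ p ∈ Finset.range (n + 1), ∑ q ∈ Finset.range (n + 1),
          a p q * Real.cos (p * x) * Real.cos (q * y)) (K L : ℕ) (x y : ℝ) :
    mixedPartial K L (hFun n) x y =
      ∑ i ∈ Finset.range (n + 1) ×ˢ Finset.range (n + 1), a i.1 i.2 * (phi K i.1 x * phi L i.2 y) := by
  unfold mixedPartial
  have h1 : ∀ x', hFun n x' = fun y => ∑ i ∈ Finset.range (n + 1) ×ˢ Finset.range (n + 1),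
      (a i.1 i.2 * Real.cos (i.1 * x')) * cos ((i.2 : ℝ) * y) := by
    intro x'; funext y; rw [ha, Finset.sum_product]
  have h2 : (fun x' => iteratedDeriv L (hFun n x') y) = fun x' =>
      ∑ i ∈ Finset.range (n + 1) ×ˢ Finset.range (n + 1),
      (a i.1 i.2 * phi L i.2 y) * cos ((i.1 : ℝ) * x') := by
    funext x'
    rw [h1, iterD]
    apply Finset.sum_congr rfl
    intro i _
    unfold phi; ring
  rw [h2, iterD]
  apply Finset.sum_congr rfl
  intro i _
  unfold phi; ring

theorem integ (S : Finset (ℕ × ℕ)) (a : ℕ → ℕ → ℝ) (K L : ℕ) :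
    ∫ z in Set.Icc (0 : ℝ) (2 * π) ×ˢ Set.Icc (0 : ℝ) (2 * π),
      (∑ i ∈ S, a i.1 i.2 * (phi K i.1 z.1 * phi L i.2 z.2)) ^ 2 =
    ∑ i ∈ S, a i.1 i.2 ^ 2 * ((π * (i.1 : ℝ) ^ (2 * K) * (if i.1 = 0 then 2 else 1)) *
      (π * (i.2 : ℝ) ^ (2 * L) * (if i.2 = 0 then 2 else 1))) := by
  have e : ∀ z : ℝ × ℝ, (∑ i ∈ S, a i.1 i.2 * (phi K i.1 z.1 * phi L i.2 z.2)) ^ 2 =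
      ∑ i ∈ S, ∑ j ∈ S, (a i.1 i.2 * a j.1 j.2) *
        ((phi K i.1 z.1 * phi K j.1 z.1) * (phi L i.2 z.2 * phi L j.2 z.2)) := by
    intro z
    rw [sq, Finset.sum_mul_sum]
    refine Finset.sum_congr rfl fun i _ => Finset.sum_congr rfl fun j _ => ?_
    ring
  have hc := phi_cont
  have hI : ∀ i j : ℕ × ℕ, IntegrableOn (fun z : ℝ × ℝ => (a i.1 i.2 * a j.1 j.2) *
        ((phi K i.1 z.1 * phi K j.1 z.1) * (phi L i.2 z.2 * phi L j.2 z.2)))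
        (Set.Icc (0 : ℝ) (2 * π) ×ˢ Set.Icc (0 : ℝ) (2 * π)) := by
    intro i j
    apply ContinuousOn.integrableOn_compact (isCompact_Icc.prod isCompact_Icc)
    apply Continuous.continuousOn
    have := hc K i.1
    have := hc K j.1
    have := hc L i.2
    have := hc L j.2
    fun_prop
  simp_rw [e]
  rw [integral_finsetSum _ (fun i _ => integrable_finsetSum _ fun j _ => hI i j)]
  refine Finset.sum_congr rfl fun i hi => ?_
  rw [integral_finsetSum _ (fun j _ => hI i j)]
  have hO : ∀ K p r : ℕ, ∫ x in Set.Icc (0:ℝ) (2 * π), phi K p x * phi K r x =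
      if p = r then π * (p : ℝ) ^ (2 * K) * (if p = 0 then 2 else 1) else 0 := by
    intro K p r
    rw [← phi_orth, intervalIntegral.integral_of_le (by positivity), integral_Icc_eq_integral_Ioc]
  rw [Finset.sum_eq_single i]
  · rw [integral_const_mul, Measure.volume_eq_prod, setIntegral_prod_mul
      (fun x => phi K i.1 x * phi K i.1 x) (fun x => phi L i.2 x * phi L i.2 x), hO, hO]
    simp only [if_true]; ring
  · intro j _ hj
    rw [integral_const_mul, Measure.volume_eq_prod, setIntegral_prod_mul
      (fun x => phi K i.1 x * phi K j.1 x) (fun x => phi L i.2 x * phi L j.2 x), hO, hO]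
    by_cases h1 : i.1 = j.1
    · have : i.2 ≠ j.2 := fun h => hj (Prod.ext h1.symm h.symm)
      simp [this]
    · simp [h1]
  · intro h; exact absurd hi h

theorem RL (μ : Measure ℝ) [IsFiniteMeasure μ] (hμ : μ ≪ volume) :
    Tendsto (fun n : ℕ => ∫ t, cos (n * t) ∂μ) atTop (nhds 0) := by
  have h := Real.tendsto_integral_exp_smul_cocompact (fun t => (((μ.rnDeriv volume t).toReal : ℝ) : ℂ))
  have hw : Tendsto (fun n : ℕ => (n : ℝ) * (2 * π)⁻¹) atTop (cocompact ℝ) := by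
    apply Tendsto.mono_right _ atTop_le_cocompact
    exact (tendsto_natCast_atTop_atTop).atTop_mul_const (by positivity)
  have h2 := (Complex.continuous_re.tendsto _).comp (h.comp hw)
  simp only [Complex.zero_re] at h2
  refine h2.congr fun n => ?_
  simp only [Function.comp]
  have hint : Integrable (fun v : ℝ => Real.fourierChar (-(v * ((n:ℝ) * (2 * π)⁻¹))) •
      (((μ.rnDeriv volume v).toReal : ℝ) : ℂ)) := by
    have := (Measure.integrable_toReal_rnDeriv (μ := μ) (ν := volume)).ofReal (𝕜 := ℂ)
    refine this.mono ?_ ?_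
    · refine AEStronglyMeasurable.fun_smul ?_ this.1
      exact (Continuous.aestronglyMeasurable (by fun_prop))
    · filter_upwards with v
      simp
  have : ∫ t, cos (n * t) ∂μ = ∫ v, (Real.fourierChar (-(v * ((n:ℝ) * (2 * π)⁻¹))) •
      (((μ.rnDeriv volume v).toReal : ℝ) : ℂ)).re := by
    rw [← integral_rnDeriv_smul hμ]
    congr 1
    funext v
    rw [Circle.smul_def, Real.fourierChar_apply, smul_eq_mul, smul_eq_mul, Complex.re_mul_ofReal,
      Complex.exp_ofReal_mul_I_re, mul_comm]
    congr 1
    rw [← cos_neg]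
    congr 1
    field_simp
  rw [this]
  exact (integral_re hint).symm

theorem ptwise (y : ℝ) :
    Tendsto (fun n : ℕ => ∫ x in (0:ℝ)..π, hFun n x y) atTop (nhds 0) := by
  set θ : ℝ → ℝ := fun x => arccos ((cos x + cos y) / 2) with hθ
  have hcos : ∀ x, cos (θ x) = (cos x + cos y) / 2 := fun x =>
    cos_arccos (by linarith [neg_one_le_cos x, neg_one_le_cos y])
      (by linarith [cos_le_one x, cos_le_one y])
  have hmeas : Measurable θ := by
    have : Continuous θ := by simp only [hθ]; exact continuous_arccos.comp (by fun_prop)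
    exact this.measurable
  set μ := Measure.map θ (volume.restrict (Set.Ioo 0 π)) with hμd
  have : IsFiniteMeasure (volume.restrict (Set.Ioo 0 π)) := inferInstance
  have hfin : IsFiniteMeasure μ := by rw [hμd]; infer_instance
  have hac : μ ≪ volume := by
    refine Measure.AbsolutelyContinuous.mk fun s hs h0 => ?_
    rw [hμd, Measure.map_apply hmeas hs, Measure.restrict_apply (hmeas hs)]
    set N := s ∩ {t | 2 * cos t - cos y ≠ -1 ∧ 2 * cos t - cos y ≠ 1}
    have hN : volume N = 0 := measure_mono_null Set.inter_subset_left h0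
    refine measure_mono_null ?_ (addHaar_image_eq_zero_of_differentiableOn_of_addHaar_eq_zero
      (f := fun t => arccos (2 * cos t - cos y)) volume ?_ hN)
    · rintro x ⟨hx, hx0, hx1⟩
      have e : 2 * cos (θ x) - cos y = cos x := by rw [hcos]; ring
      have hx2 := sin_pos_of_pos_of_lt_pi hx0 hx1
      have hsq := sin_sq_add_cos_sq x
      refine ⟨θ x, ⟨hx, ?_, ?_⟩, ?_⟩
      · rw [e]; intro h; rw [h] at hsq; nlinarith
      · rw [e]; intro h; rw [h] at hsq; nlinarith
      · simp only [e]; exact arccos_cos hx0.le hx1.le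
    · intro t ht
      refine DifferentiableAt.differentiableWithinAt ?_
      exact DifferentiableAt.comp (g := arccos) (f := fun t => 2 * cos t - cos y) t
        (differentiableAt_arccos.2 ht.2) (by fun_prop)
  refine (RL μ hac).congr fun n => ?_
  rw [hμd, integral_map hmeas.aemeasurable (Continuous.aestronglyMeasurable (by fun_prop)),
    intervalIntegral.integral_of_le pi_pos.le, integral_Ioc_eq_integral_Ioo]
  congr 1
  funext x
  unfold hFun
  rw [← hcos, Polynomial.Chebyshev.T_real_cos]
  simp

theorem hFun_le (n : ℕ) (x y : ℝ) : |hFun n x y| ≤ 1 := by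
  have : cos (arccos ((cos x + cos y) / 2)) = (cos x + cos y) / 2 := 
    cos_arccos (by linarith [neg_one_le_cos x, neg_one_le_cos y])
      (by linarith [cos_le_one x, cos_le_one y])
  unfold hFun
  rw [← this, Polynomial.Chebyshev.T_real_cos]
  exact abs_cos_le_one _

theorem g_eq (n : ℕ) (a : ℕ → ℕ → ℝ)
    (ha : ∀ (x y : ℝ), hFun n x y =
        ∑ p ∈ Finset.range (n + 1), ∑ q ∈ Finset.range (n + 1),
          a p q * Real.cos (p * x) * Real.cos (q * y)) (y : ℝ) :
    ∫ x in (0:ℝ)..π, hFun n x y = π * ∑ q ∈ Finset.range (n + 1), a 0 q * phi 0 q y := by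
  simp_rw [ha]
  rw [intervalIntegral.integral_finsetSum
    (fun i _ => Continuous.intervalIntegrable (by fun_prop) _ _)]
  rw [Finset.sum_eq_single 0]
  · simp [phi]
  · intro p _ hp
    have e : ∀ x : ℝ, ∑ q ∈ Finset.range (n + 1), a p q * cos (p * x) * cos (q * y) =
      (∑ q ∈ Finset.range (n + 1), a p q * cos (q * y)) * cos (p * x) := by
      intro x; rw [Finset.sum_mul]; exact Finset.sum_congr rfl fun i _ => by ring
    simp_rw [e]
    have hp' : (p : ℝ) ≠ 0 := by exact_mod_cast hp
    rw [intervalIntegral.integral_const_mul,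
      intervalIntegral.integral_comp_mul_left (fun x => cos x) hp', integral_cos]
    simp
  · simp

theorem g_sq (n : ℕ) (c : ℕ → ℝ) :
    ∑ q ∈ Finset.range (n + 1), c q ^ 2 ≤
    π⁻¹ * ∫ y in (0:ℝ)..(2 * π), (∑ q ∈ Finset.range (n + 1), c q * phi 0 q y) ^ 2 := by
  have e : ∀ y, (∑ q ∈ Finset.range (n + 1), c q * phi 0 q y) ^ 2 =
      ∑ i ∈ Finset.range (n + 1), ∑ j ∈ Finset.range (n + 1),
        c i * c j * (phi 0 i y * phi 0 j y) := by
    intro z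
    rw [sq, Finset.sum_mul_sum]
    refine Finset.sum_congr rfl fun i _ => Finset.sum_congr rfl fun j _ => ?_
    ring
  have hc := phi_cont 0
  simp_rw [e]
  rw [intervalIntegral.integral_finsetSum
    (fun i _ => Continuous.intervalIntegrable (by fun_prop) _ _), Finset.mul_sum]
  refine Finset.sum_le_sum fun i hi => ?_
  rw [intervalIntegral.integral_finsetSum
    (fun i _ => Continuous.intervalIntegrable (by fun_prop) _ _)]
  simp_rw [intervalIntegral.integral_const_mul, phi_orth]
  simp only [mul_ite, mul_zero, Finset.sum_ite_eq, hi, if_true]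
  have := pi_pos
  split_ifs
  · field_simp; nlinarith [sq_nonneg (c i)]
  · field_simp; simp

theorem axis (a : ℕ → ℕ → ℕ → ℝ)
    (ha : ∀ (n : ℕ) (x y : ℝ), hFun n x y =
        ∑ p ∈ Finset.range (n + 1), ∑ q ∈ Finset.range (n + 1),
          a n p q * Real.cos (p * x) * Real.cos (q * y)) :
    Tendsto (fun n => ∑ q ∈ Finset.range (n + 1), a n 0 q ^ 2) atTop (nhds 0) := by
  have hg : ∀ n y, ∑ q ∈ Finset.range (n + 1), a n 0 q * phi 0 q y =
      π⁻¹ * ∫ x in (0:ℝ)..π, hFun n x y := by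
    intro n y
    rw [g_eq n (a n) (ha n)]; field_simp
  have hb : ∀ n y, |∑ q ∈ Finset.range (n + 1), a n 0 q * phi 0 q y| ≤ 1 := by
    intro n y
    rw [hg, abs_mul]
    have h1 := intervalIntegral.norm_integral_le_of_norm_le_const (a := (0:ℝ)) (b := π) (C := 1)
      (f := fun x => hFun n x y) (fun x _ => hFun_le n x y)
    rw [Real.norm_eq_abs, sub_zero, abs_of_pos pi_pos, one_mul] at h1
    rw [abs_of_pos (inv_pos.2 pi_pos)]
    calc π⁻¹ * _ ≤ π⁻¹ * π := by gcongr
      _ = 1 := by field_simp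
  have hc := phi_cont 0
  have hlim : Tendsto (fun n => ∫ y in (0:ℝ)..(2 * π),
      (∑ q ∈ Finset.range (n + 1), a n 0 q * phi 0 q y) ^ 2) atTop
      (nhds (∫ y in (0:ℝ)..(2 * π), (0:ℝ))) := by
    apply intervalIntegral.tendsto_integral_filter_of_dominated_convergence (fun _ => 1)
    · exact Eventually.of_forall fun n => Continuous.aestronglyMeasurable (by fun_prop)
    · refine Eventually.of_forall fun n => Eventually.of_forall fun y _ => ?_
      rw [norm_pow, Real.norm_eq_abs]
      exact pow_le_one₀ (abs_nonneg _) (hb n y)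
    · exact intervalIntegrable_const
    · refine Eventually.of_forall fun y _ => ?_
      simp_rw [hg]
      simpa using ((ptwise y).const_mul π⁻¹).pow 2
  have hlim2 := hlim.const_mul π⁻¹
  simp only [intervalIntegral.integral_zero, mul_zero] at hlim2
  exact squeeze_zero (fun n => Finset.sum_nonneg fun i _ => sq_nonneg _)
    (fun n => g_sq n (a n 0)) hlim2

/-- `lim_{n→∞} | Σ_{p,q} a_{n,p,q}² (p/n)^{2K} (q/n)^{2L}
  − (1/(π² n^{2(K+L)})) ∫_{[0,2π]²} (∂_x^K ∂_y^L h_n)² | = 0`. -/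
theorem moment_to_integral
    (a : ℕ → ℕ → ℕ → ℝ)
    (ha : ∀ (n : ℕ) (x y : ℝ),
      (Polynomial.Chebyshev.T ℝ n).eval ((Real.cos x + Real.cos y) / 2) =
        ∑ p ∈ Finset.range (n + 1), ∑ q ∈ Finset.range (n + 1),
          a n p q * Real.cos (p * x) * Real.cos (q * y))
    (K L : ℕ) :
    Filter.Tendsto (fun n : ℕ =>
        |(∑ p ∈ Finset.range (n + 1), ∑ q ∈ Finset.range (n + 1),
            (a n p q) ^ 2 * ((p : ℝ) / n) ^ (2 * K) * ((q : ℝ) / n) ^ (2 * L)) -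
          (π ^ 2 * (n : ℝ) ^ (2 * (K + L)))⁻¹ *
            ∫ z in Set.Icc (0 : ℝ) (2 * π) ×ˢ Set.Icc (0 : ℝ) (2 * π),
              (mixedPartial K L (hFun n) z.1 z.2) ^ 2|)
      Filter.atTop (nhds 0) := by
  have ha1 : ∀ (n : ℕ) (x y : ℝ), hFun n x y =
        ∑ p ∈ Finset.range (n + 1), ∑ q ∈ Finset.range (n + 1),
          a n p q * Real.cos (p * x) * Real.cos (q * y) := ha
  have ha2 : ∀ (n : ℕ) (x y : ℝ), hFun n x y =
        ∑ p ∈ Finset.range (n + 1), ∑ q ∈ Finset.range (n + 1),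
          a n q p * Real.cos (p * x) * Real.cos (q * y) := by
    intro n x y
    have : hFun n x y = hFun n y x := by unfold hFun; rw [add_comm]
    rw [this, ha1, Finset.sum_comm]
    refine Finset.sum_congr rfl fun i _ => Finset.sum_congr rfl fun j _ => ?_
    ring
  have t1 := axis a ha1
  have t2 := axis (fun n p q => a n q p) ha2
  have t3 := (t1.add t2).const_mul 3
  simp only [add_zero, mul_zero] at t3
  refine squeeze_zero' (Eventually.of_forall fun n => abs_nonneg _) ?_ t3
  filter_upwards [eventually_gt_atTop 0] with n hn
  have hn' : (0:ℝ) < n := by exact_mod_cast hn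
  simp_rw [mixed n (a n) (ha1 n)]
  rw [integ, Finset.mul_sum, ← Finset.sum_product', ← Finset.sum_sub_distrib]
  have s1 : ∑ q ∈ Finset.range (n + 1), a n 0 q ^ 2 =
      ∑ i ∈ Finset.range (n + 1) ×ˢ Finset.range (n + 1),
        if i.1 = 0 then a n i.1 i.2 ^ 2 else 0 := by
    rw [Finset.sum_product, Finset.sum_eq_single (M := ℝ) (s := Finset.range (n + 1)) (a := 0)
      (f := fun p => ∑ q ∈ Finset.range (n + 1), if p = 0 then a n p q ^ 2 else 0)]
    · simp
    · intro p _ hp; simp [hp]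
    · simp
  have s2 : ∑ q ∈ Finset.range (n + 1), a n q 0 ^ 2 =
      ∑ i ∈ Finset.range (n + 1) ×ˢ Finset.range (n + 1),
        if i.2 = 0 then a n i.1 i.2 ^ 2 else 0 := by
    rw [Finset.sum_product_right, Finset.sum_eq_single (M := ℝ) (s := Finset.range (n + 1)) (a := 0)
      (f := fun p => ∑ q ∈ Finset.range (n + 1), if p = 0 then a n q p ^ 2 else 0)]
    · simp
    · intro p _ hp; simp [hp]
    · simp
  rw [s1, s2, ← Finset.sum_add_distrib, Finset.mul_sum]
  refine (Finset.abs_sum_le_sum_abs _ _).trans (Finset.sum_le_sum fun i hi => ?_)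
  rw [Finset.mem_product, Finset.mem_range, Finset.mem_range] at hi
  set u : ℝ := ((i.1 : ℝ) / n) ^ (2 * K) with hu
  set v : ℝ := ((i.2 : ℝ) / n) ^ (2 * L) with hv
  have hu0 : 0 ≤ u := by positivity
  have hv0 : 0 ≤ v := by positivity
  have hu1 : u ≤ 1 := by
    apply pow_le_one₀ (by positivity)
    rw [div_le_one hn']; exact_mod_cast Nat.lt_succ_iff.1 hi.1
  have hv1 : v ≤ 1 := by
    apply pow_le_one₀ (by positivity)
    rw [div_le_one hn']; exact_mod_cast Nat.lt_succ_iff.1 hi.2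
  have e : a n i.1 i.2 ^ 2 * u * v - (π ^ 2 * (n : ℝ) ^ (2 * (K + L)))⁻¹ *
      (a n i.1 i.2 ^ 2 * ((π * (i.1 : ℝ) ^ (2 * K) * (if i.1 = 0 then 2 else 1)) *
      (π * (i.2 : ℝ) ^ (2 * L) * (if i.2 = 0 then 2 else 1)))) =
      a n i.1 i.2 ^ 2 * (u * v) *
        (1 - (if i.1 = 0 then 2 else 1) * (if i.2 = 0 then 2 else 1)) := by
    rw [hu, hv, div_pow, div_pow, mul_add, pow_add]
    have := pi_pos
    field_simp
  rw [e, abs_mul, abs_of_nonneg (by positivity)]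
  have huv : u * v ≤ 1 := mul_le_one₀ hu1 hv0 hv1
  have hA : a n i.1 i.2 ^ 2 * (u * v) ≤ a n i.1 i.2 ^ 2 :=
    mul_le_of_le_one_right (sq_nonneg _) huv
  have hA0 := sq_nonneg (a n i.1 i.2)
  split_ifs <;> norm_num <;> nlinarith
end

section
/- For every n ∈ ℕ, Σ_{p,q=0}^{n} a_{n,p,q}² ≤ 4. -/
open Real Finset

lemma int_cos_aux (k : ℤ) : ∫ x in (0:ℝ)..π, Real.cos (k * x) = if k = 0 then π else 0 := by
  split_ifs with h
  · simp [h]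
  · have hk : (k : ℝ) ≠ 0 := by exact_mod_cast h
    rw [intervalIntegral.integral_comp_mul_left (fun x => Real.cos x) hk]
    simp [Real.sin_int_mul_pi]

lemma int_cos_cos_aux (p q : ℕ) : ∫ x in (0:ℝ)..π, Real.cos (p * x) * Real.cos (q * x)
    = if p = q then (if p = 0 then π else π / 2) else 0 := by
  have h : ∀ x : ℝ, Real.cos (p * x) * Real.cos (q * x) =
      (1/2) * (Real.cos (((p - q : ℤ) : ℝ) * x) + Real.cos (((p + q : ℤ) : ℝ) * x)) := by
    intro x
    push_cast
    rw [sub_mul, add_mul, Real.cos_sub, Real.cos_add]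
    ring
  simp_rw [h]
  rw [intervalIntegral.integral_const_mul, intervalIntegral.integral_add
    (Continuous.intervalIntegrable (by fun_prop) _ _)
    (Continuous.intervalIntegrable (by fun_prop) _ _), int_cos_aux, int_cos_aux]
  by_cases hpq : p = q
  · subst hpq
    by_cases hp : p = 0
    · simp [hp]; ring
    · have : ((p:ℤ) + p) ≠ 0 := by omega
      simp [hp]; ring
  · have h1 : ((p:ℤ) - q) ≠ 0 := by omega
    have h2 : ((p:ℤ) + q) ≠ 0 := by omega
    simp only [h1, h2, hpq, if_false]; ring

lemma parseval_aux (c : ℕ → ℝ) (s : Finset ℕ) :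
    π / 2 * ∑ p ∈ s, c p ^ 2 ≤ ∫ x in (0:ℝ)..π, (∑ p ∈ s, c p * Real.cos (p * x)) ^ 2 := by
  have h : ∀ x : ℝ, (∑ p ∈ s, c p * Real.cos (p * x)) ^ 2 =
      ∑ p ∈ s, ∑ q ∈ s, (c p * c q) * (Real.cos (p * x) * Real.cos (q * x)) := by
    intro x
    rw [sq, Finset.sum_mul_sum]
    exact Finset.sum_congr rfl fun p _ => Finset.sum_congr rfl fun q _ => by ring
  simp_rw [h]
  rw [intervalIntegral.integral_finsetSum
    (fun _ _ => Continuous.intervalIntegrable (by fun_prop) _ _), Finset.mul_sum]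
  refine Finset.sum_le_sum fun p hp => ?_
  rw [intervalIntegral.integral_finsetSum
    (fun _ _ => Continuous.intervalIntegrable (by fun_prop) _ _)]
  simp_rw [intervalIntegral.integral_const_mul, int_cos_cos_aux]
  simp only [mul_ite, mul_zero, Finset.sum_ite_eq, hp, if_true]
  have := Real.pi_pos
  split_ifs <;> nlinarith [mul_nonneg this.le (sq_nonneg (c p))]

lemma bound_aux (c : ℕ → ℕ → ℝ) (s t : Finset ℕ) (M : ℝ)
    (h : ∀ x : ℝ, ∑ i ∈ t, (∑ p ∈ s, c i p * Real.cos (p * x)) ^ 2 ≤ M) :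
    ∑ i ∈ t, ∑ p ∈ s, c i p ^ 2 ≤ 2 * M := by
  have h1 : ∫ x in (0:ℝ)..π, ∑ i ∈ t, (∑ p ∈ s, c i p * Real.cos (p * x)) ^ 2 ≤ π * M := by
    have := intervalIntegral.integral_mono_on (μ := MeasureTheory.volume) Real.pi_pos.le
      (Continuous.intervalIntegrable (by fun_prop) _ _)
      (Continuous.intervalIntegrable (continuous_const (y := M)) _ _) (fun x _ => h x)
    simpa using this
  rw [intervalIntegral.integral_finsetSum
    (fun _ _ => Continuous.intervalIntegrable (by fun_prop) _ _)] at h1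
  have h2 := Finset.sum_le_sum fun i (_ : i ∈ t) => parseval_aux (c i) s
  rw [← Finset.mul_sum] at h2
  have := Real.pi_pos
  have h3 : π * (∑ i ∈ t, ∑ p ∈ s, c i p ^ 2) ≤ π * (2 * M) := by linarith
  exact le_of_mul_le_mul_left h3 this

/-- `Σ_{p,q=0}^{n} a_{n,p,q}² ≤ 4`. -/
theorem sum_sq_coeff_le_four
    (a : ℕ → ℕ → ℕ → ℝ)
    (ha : ∀ (n : ℕ) (x y : ℝ),
      (Polynomial.Chebyshev.T ℝ n).eval ((Real.cos x + Real.cos y) / 2) =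
        ∑ p ∈ Finset.range (n + 1), ∑ q ∈ Finset.range (n + 1),
          a n p q * Real.cos (p * x) * Real.cos (q * y))
    (n : ℕ) :
    ∑ p ∈ Finset.range (n + 1), ∑ q ∈ Finset.range (n + 1), (a n p q) ^ 2 ≤ 4 := by
  have key : ∀ y : ℝ, ∑ p ∈ Finset.range (n + 1),
      (∑ q ∈ Finset.range (n + 1), a n p q * Real.cos (q * y)) ^ 2 ≤ 2 := by
    intro y
    have := bound_aux (fun _ p => ∑ q ∈ Finset.range (n + 1), a n p q * Real.cos (q * y))
      (Finset.range (n + 1)) {0} 1 (by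
        intro x
        have e : ∑ p ∈ Finset.range (n + 1), (∑ q ∈ Finset.range (n + 1),
            a n p q * Real.cos (q * y)) * Real.cos (p * x) =
            (Polynomial.Chebyshev.T ℝ n).eval ((Real.cos x + Real.cos y) / 2) := by
          rw [ha]
          refine Finset.sum_congr rfl fun p _ => ?_
          rw [Finset.sum_mul]
          exact Finset.sum_congr rfl fun q _ => by ring
        rw [Finset.sum_singleton, e]
        have hz : Real.cos (Real.arccos ((Real.cos x + Real.cos y) / 2))
            = (Real.cos x + Real.cos y) / 2 :=
          Real.cos_arccos (by linarith [Real.neg_one_le_cos x, Real.neg_one_le_cos y])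
            (by linarith [Real.cos_le_one x, Real.cos_le_one y])
        rw [← hz, Polynomial.Chebyshev.T_real_cos]
        exact Real.cos_sq_le_one _)
    simpa using this
  have := bound_aux (fun p q => a n p q) (Finset.range (n + 1)) (Finset.range (n + 1)) 2 key
  linarith
end

section
/- For all K, L ∈ ℕ, lim_{n→∞} | Σ_{p,q=0}^{n} a_{n,p,q}² (p/n)^{2K} (q/n)^{2L} (w_K(p) w_L(q) − 1) | = 0. -/
open Real Finset Filter

/-- The weight `w_k(r)`: equal to `2` if `r = 0` and `k` even, `0` if `r = 0` and `k` odd,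
and `1` if `r ≥ 1`. -/
noncomputable def wgt (k r : ℕ) : ℝ :=
  if r = 0 then (if Even k then 2 else 0) else 1

open MeasureTheory Polynomial.Chebyshev in
theorem aux_cos_int (p : ℕ) : ∫ x in (0:ℝ)..π, Real.cos (p * x) = if p = 0 then π else 0 := by
  have h := @integral_measureT_eq_integral_cos (fun x => (T ℝ (p:ℤ)).eval x)
  simp only [T_real_cos, Int.cast_natCast] at h
  rw [← h]
  split_ifs with hp
  · subst hp; simpa using integral_eval_T_real_measureT_zero
  · exact integral_eval_T_real_measureT_of_ne_zero (by exact_mod_cast hp)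

open MeasureTheory Polynomial.Chebyshev in
theorem aux_orth {p q : ℕ} (hpq : p ≠ q) :
    ∫ x in (0:ℝ)..π, Real.cos (p * x) * Real.cos (q * x) = 0 := by
  have h := @integral_measureT_eq_integral_cos (fun x => (T ℝ (p:ℤ)).eval x * (T ℝ (q:ℤ)).eval x)
  simp only [T_real_cos, Int.cast_natCast] at h
  rw [← h]
  exact integral_eval_T_real_mul_eval_T_real_measureT_of_ne hpq

open MeasureTheory Polynomial.Chebyshev in
theorem aux_orth_self (p : ℕ) :
    π / 2 ≤ ∫ x in (0:ℝ)..π, Real.cos (p * x) * Real.cos (p * x) := by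
  have h := @integral_measureT_eq_integral_cos (fun x => (T ℝ (p:ℤ)).eval x * (T ℝ (p:ℤ)).eval x)
  simp only [T_real_cos, Int.cast_natCast] at h
  rw [← h]
  by_cases hp : p = 0
  · subst hp
    have := integral_eval_T_real_mul_self_measureT_zero
    have h2 := Real.pi_pos
    simp only [Nat.cast_zero] at this ⊢
    linarith
  · exact (integral_T_real_mul_self_measureT_of_ne_zero hp).ge

open MeasureTheory in
theorem aux_RL (h : ℝ → ℝ) (hi : Integrable h) :
    Tendsto (fun n : ℕ => ∫ v, Real.cos (n * v) * h v) atTop (nhds 0) := by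
  have h1 := Real.tendsto_integral_exp_smul_cocompact (fun v => (h v : ℂ))
  have h2 : Tendsto (fun n : ℕ => (n : ℝ) / (2 * π)) atTop (cocompact ℝ) := by
    refine Tendsto.mono_right ?_ atTop_le_cocompact
    exact tendsto_natCast_atTop_atTop.atTop_div_const (by positivity)
  have h3 := (Complex.continuous_re.tendsto 0).comp (h1.comp h2)
  simp only [Complex.zero_re] at h3
  refine h3.congr fun n => ?_
  simp only [Function.comp]
  have hI : Integrable (fun v : ℝ => Real.fourierChar (-(v * ((n : ℝ) / (2 * π)))) • (h v : ℂ)) := by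
    have hc : Continuous fun v : ℝ => ((Real.fourierChar (-(v * ((n : ℝ) / (2 * π)))) : Circle) : ℂ) := by
      simp only [Real.fourierChar_apply]
      fun_prop
    have : Integrable (fun v : ℝ => ((Real.fourierChar (-(v * ((n : ℝ) / (2 * π)))) : Circle) : ℂ) * (h v : ℂ)) := by
      refine hi.ofReal.bdd_mul (c := 1) hc.aestronglyMeasurable ?_
      exact Eventually.of_forall fun v => (Circle.norm_coe _).le
    simpa [Circle.smul_def] using this
  have h4 := Complex.reCLM.integral_comp_comm hI
  simp only [Complex.reCLM_apply] at h4
  rw [← h4]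
  refine integral_congr_ae (Eventually.of_forall fun v => ?_)
  simp only [Circle.smul_def, Real.fourierChar_apply, smul_eq_mul, Complex.re_mul_ofReal]
  congr 1
  rw [Complex.exp_ofReal_mul_I_re]
  rw [← Real.cos_neg]
  congr 1
  field_simp

open MeasureTheory in
theorem aux_pt (y : ℝ) :
    Tendsto (fun n : ℕ => ∫ x in (0:ℝ)..π,
      (Polynomial.Chebyshev.T ℝ n).eval ((Real.cos x + Real.cos y) / 2)) atTop (nhds 0) := by
  set s : Set ℝ := Set.Ioo 0 π ∩ {t | 2 * Real.cos t - Real.cos y ∈ Set.Ioo (-1:ℝ) 1} with hs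
  set f : ℝ → ℝ := fun t => Real.arccos (2 * Real.cos t - Real.cos y) with hf
  set f' : ℝ → ℝ := fun t =>
    -(1 / √(1 - (2 * Real.cos t - Real.cos y) ^ 2)) * (2 * (- Real.sin t)) with hf'
  have hsm : MeasurableSet s :=
    (isOpen_Ioo.inter (isOpen_Ioo.preimage (by fun_prop))).measurableSet
  have hd : ∀ t ∈ s, HasDerivWithinAt f (f' t) s t := by
    rintro t ⟨-, h1, h2⟩
    have hg : HasDerivAt (fun t => 2 * Real.cos t - Real.cos y) (2 * (-Real.sin t)) t :=
      ((Real.hasDerivAt_cos t).const_mul 2).sub_const _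
    exact ((Real.hasDerivAt_arccos h1.ne' h2.ne).comp t hg).hasDerivWithinAt
  have hinj : Set.InjOn f s := by
    rintro t ⟨ht, h1, h2⟩ u ⟨hu, h3, h4⟩ htu
    have := Real.arccos_injOn ⟨h1.le, h2.le⟩ ⟨h3.le, h4.le⟩ htu
    exact Real.injOn_cos ⟨ht.1.le, ht.2.le⟩ ⟨hu.1.le, hu.2.le⟩ (by linarith)
  have him : f '' s = Set.Ioo 0 π := by
    ext x
    constructor
    · rintro ⟨t, ⟨ht, h1, h2⟩, rfl⟩
      refine ⟨Real.arccos_pos.2 h2, ?_⟩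
      refine lt_of_le_of_ne (Real.arccos_le_pi _) fun h => ?_
      have := Real.arccos_eq_pi.1 h
      linarith
    · rintro ⟨hx0, hxp⟩
      have c1 : Real.cos x < 1 := by
        have := Real.cos_lt_cos_of_nonneg_of_le_pi le_rfl hxp.le hx0
        simpa using this
      have c2 : -1 < Real.cos x := by
        have := Real.cos_lt_cos_of_nonneg_of_le_pi hx0.le le_rfl hxp
        simpa using this
      have c3 := Real.cos_le_one y
      have c4 := Real.neg_one_le_cos y
      have hc : Real.cos (Real.arccos ((Real.cos x + Real.cos y) / 2)) = (Real.cos x + Real.cos y) / 2 :=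
        Real.cos_arccos (by linarith) (by linarith)
      have hc' : 2 * Real.cos (Real.arccos ((Real.cos x + Real.cos y) / 2)) - Real.cos y = Real.cos x := by
        rw [hc]; ring
      refine ⟨Real.arccos ((Real.cos x + Real.cos y) / 2), ⟨⟨Real.arccos_pos.2 (by linarith), ?_⟩, ?_⟩, ?_⟩
      · refine lt_of_le_of_ne (Real.arccos_le_pi _) fun h => ?_
        have := Real.arccos_eq_pi.1 h
        linarith
      · simp only [Set.mem_ofPred_eq, hc']; exact ⟨c2, c1⟩
      · simp only [hf, hc']; exact Real.arccos_cos hx0.le hxp.le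
  have hint : IntegrableOn (fun t => |f' t|) s := by
    have := (integrableOn_image_iff_integrableOn_abs_deriv_smul hsm hd hinj (fun _ => (1:ℝ))).1
      (by rw [him]; simp)
    simpa using this
  have hRL := aux_RL (s.indicator fun t => |f' t|) ((integrable_indicator_iff hsm).2 hint)
  refine hRL.congr fun n => ?_
  rw [intervalIntegral.integral_of_le Real.pi_pos.le, ← integral_Ioc_eq_integral_Ioo.symm, ← him,
    integral_image_eq_integral_abs_deriv_smul hsm hd hinj, ← integral_indicator hsm]
  refine integral_congr_ae (Eventually.of_forall fun t => ?_)
  by_cases ht : t ∈ s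
  · simp only [Set.indicator_of_mem ht, smul_eq_mul]
    have : Real.cos (f t) = 2 * Real.cos t - Real.cos y :=
      Real.cos_arccos ht.2.1.le ht.2.2.le
    rw [this, mul_comm]
    congr 1
    rw [show (2 * Real.cos t - Real.cos y + Real.cos y) / 2 = Real.cos t by ring,
      Polynomial.Chebyshev.T_real_cos]
    simp
  · simp [Set.indicator_of_notMem ht]

open MeasureTheory in
theorem aux_edge (a : ℕ → ℕ → ℕ → ℝ)
    (ha : ∀ (n : ℕ) (x y : ℝ),
      (Polynomial.Chebyshev.T ℝ n).eval ((Real.cos x + Real.cos y) / 2) =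
        ∑ p ∈ Finset.range (n + 1), ∑ q ∈ Finset.range (n + 1),
          a n p q * Real.cos (p * x) * Real.cos (q * y)) :
    Tendsto (fun n : ℕ => ∑ q ∈ Finset.range (n + 1), (a n 0 q) ^ 2) atTop (nhds 0) := by
  set g : ℕ → ℝ → ℝ := fun n y => ∑ q ∈ Finset.range (n + 1), a n 0 q * Real.cos (q * y) with hg
  have h1 : ∀ (n : ℕ) (y : ℝ), ∫ x in (0:ℝ)..π,
      (Polynomial.Chebyshev.T ℝ n).eval ((Real.cos x + Real.cos y) / 2) = π * g n y := by
    intro n y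
    simp only [ha]
    rw [intervalIntegral.integral_finsetSum
      (fun p _ => Continuous.intervalIntegrable (by fun_prop) _ _)]
    have : ∀ p ∈ Finset.range (n + 1), ∫ x in (0:ℝ)..π, ∑ q ∈ Finset.range (n + 1),
          a n p q * Real.cos (p * x) * Real.cos (q * y) =
        if p = 0 then π * g n y else 0 := by
      intro p _
      have e : ∀ x, ∑ q ∈ Finset.range (n + 1), a n p q * Real.cos (p * x) * Real.cos (q * y) =
          Real.cos (p * x) * ∑ q ∈ Finset.range (n + 1), a n p q * Real.cos (q * y) := by
        intro x; rw [Finset.mul_sum]; exact Finset.sum_congr rfl fun _ _ => by ring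
      simp only [e]
      rw [intervalIntegral.integral_mul_const, aux_cos_int]
      split_ifs with hp
      · subst hp; rfl
      · simp
    rw [Finset.sum_congr rfl this]
    simp
  have hgc : ∀ n, Continuous (g n) := fun n => by simp only [hg]; fun_prop
  have hlim : ∀ y, Tendsto (fun n => g n y) atTop (nhds 0) := by
    intro y
    have := (aux_pt y).const_mul (1 / π)
    simp only [h1, mul_zero] at this
    refine this.congr fun n => ?_
    have := Real.pi_ne_zero
    field_simp
  have hbd : ∀ n y, |g n y| ≤ 1 := by
    intro n y
    have hb : ‖∫ x in (0:ℝ)..π,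
      (Polynomial.Chebyshev.T ℝ n).eval ((Real.cos x + Real.cos y) / 2)‖ ≤ 1 * |π - 0| := by
      refine intervalIntegral.norm_integral_le_of_norm_le_const fun x _ => ?_
      rw [Real.norm_eq_abs]
      apply Polynomial.Chebyshev.abs_eval_T_real_le_one
      rw [abs_le]
      constructor <;> linarith [Real.cos_le_one x, Real.cos_le_one y, Real.neg_one_le_cos x,
        Real.neg_one_le_cos y]
    rw [h1, Real.norm_eq_abs, abs_mul, sub_zero, mul_comm] at hb
    exact le_of_mul_le_mul_right hb (abs_pos.2 Real.pi_ne_zero)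
  have hI : Tendsto (fun n => ∫ y in (0:ℝ)..π, (g n y) ^ 2) atTop (nhds 0) := by
    have := intervalIntegral.tendsto_integral_filter_of_dominated_convergence
      (F := fun n y => (g n y) ^ 2) (f := fun _ => (0:ℝ)) (μ := volume) (a := 0) (b := π) (l := atTop)
      (fun _ => (1:ℝ))
      (Eventually.of_forall fun n => ((hgc n).pow 2).aestronglyMeasurable)
      (Eventually.of_forall fun n => Eventually.of_forall fun y _ => by
        rw [Real.norm_eq_abs, abs_pow]
        exact pow_le_one₀ (abs_nonneg _) (hbd n y))
      (by simp)
      (Eventually.of_forall fun y _ => by simpa using (hlim y).pow 2)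
    simpa using this
  have hP : ∀ n, π / 2 * ∑ q ∈ Finset.range (n + 1), (a n 0 q) ^ 2 ≤ ∫ y in (0:ℝ)..π, (g n y) ^ 2 := by
    intro n
    have e : ∀ y, (g n y) ^ 2 = ∑ p ∈ Finset.range (n + 1), ∑ q ∈ Finset.range (n + 1),
        (a n 0 p * a n 0 q) * (Real.cos (p * y) * Real.cos (q * y)) := by
      intro y
      simp only [hg, sq, Finset.sum_mul_sum]
      exact Finset.sum_congr rfl fun _ _ => Finset.sum_congr rfl fun _ _ => by ring
    simp only [e]
    rw [intervalIntegral.integral_finsetSum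
      (fun p _ => Continuous.intervalIntegrable (by fun_prop) _ _), Finset.mul_sum]
    refine Finset.sum_le_sum fun p hp => ?_
    rw [intervalIntegral.integral_finsetSum
      (fun p _ => Continuous.intervalIntegrable (by fun_prop) _ _)]
    simp only [intervalIntegral.integral_const_mul]
    rw [Finset.sum_eq_single_of_mem p hp]
    · nlinarith [aux_orth_self p, sq_nonneg (a n 0 p)]
    · intro q _ hq
      rw [aux_orth hq.symm, mul_zero]
  have hI2 := hI.const_mul (2 / π)
  rw [mul_zero] at hI2
  refine squeeze_zero (fun n => Finset.sum_nonneg fun _ _ => sq_nonneg _) (fun n => ?_) hI2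
  have := mul_le_mul_of_nonneg_left (hP n) (show 0 ≤ 2 / π by positivity)
  refine le_trans (le_of_eq ?_) this
  have := Real.pi_ne_zero
  field_simp

theorem aux_wgt (k r : ℕ) : 0 ≤ wgt k r ∧ wgt k r ≤ 2 := by
  unfold wgt
  split_ifs <;> norm_num

/-- `lim_{n→∞} | Σ_{p,q} a_{n,p,q}² (p/n)^{2K} (q/n)^{2L} (w_K(p) w_L(q) − 1) | = 0`. -/
theorem weighted_moment_difference_tendsto_zero
    (a : ℕ → ℕ → ℕ → ℝ)
    (ha : ∀ (n : ℕ) (x y : ℝ),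
      (Polynomial.Chebyshev.T ℝ n).eval ((Real.cos x + Real.cos y) / 2) =
        ∑ p ∈ Finset.range (n + 1), ∑ q ∈ Finset.range (n + 1),
          a n p q * Real.cos (p * x) * Real.cos (q * y))
    (K L : ℕ) :
    Filter.Tendsto (fun n : ℕ =>
        |∑ p ∈ Finset.range (n + 1), ∑ q ∈ Finset.range (n + 1),
            (a n p q) ^ 2 * ((p : ℝ) / n) ^ (2 * K) * ((q : ℝ) / n) ^ (2 * L) *
              (wgt K p * wgt L q - 1)|)
      Filter.atTop (nhds 0) := by
  have hE1 := aux_edge a ha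
  have hE2 := aux_edge (fun n p q => a n q p) (by
    intro n x y
    rw [add_comm (Real.cos x), ha, Finset.sum_comm]
    exact Finset.sum_congr rfl fun _ _ => Finset.sum_congr rfl fun _ _ => by ring)
  have hE := (hE1.add hE2).const_mul 3
  simp only [add_zero, mul_zero] at hE
  refine squeeze_zero (fun n => abs_nonneg _) (fun n => ?_) hE
  have hterm : ∀ p ∈ Finset.range (n + 1), ∀ q ∈ Finset.range (n + 1),
      |(a n p q) ^ 2 * ((p : ℝ) / n) ^ (2 * K) * ((q : ℝ) / n) ^ (2 * L) *
              (wgt K p * wgt L q - 1)| ≤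
        3 * ((if p = 0 then (a n p q) ^ 2 else 0) + (if q = 0 then (a n p q) ^ 2 else 0)) := by
    intro p hp q hq
    have hp' : (p : ℝ) ≤ n := by exact_mod_cast Nat.lt_succ_iff.1 (Finset.mem_range.1 hp)
    have hq' : (q : ℝ) ≤ n := by exact_mod_cast Nat.lt_succ_iff.1 (Finset.mem_range.1 hq)
    have b1 : ((p : ℝ) / n) ^ (2 * K) ≤ 1 :=
      pow_le_one₀ (by positivity) (div_le_one_of_le₀ hp' (by positivity))
    have b2 : ((q : ℝ) / n) ^ (2 * L) ≤ 1 :=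
      pow_le_one₀ (by positivity) (div_le_one_of_le₀ hq' (by positivity))
    have b3 : |wgt K p * wgt L q - 1| ≤ 3 := by
      obtain ⟨u0, u1⟩ := aux_wgt K p
      obtain ⟨v0, v1⟩ := aux_wgt L q
      rw [abs_le]
      constructor <;> nlinarith
    have b4 : |(a n p q) ^ 2 * ((p : ℝ) / n) ^ (2 * K) * ((q : ℝ) / n) ^ (2 * L) *
              (wgt K p * wgt L q - 1)| ≤ (a n p q) ^ 2 * 3 := by
      rw [abs_mul, abs_of_nonneg (by positivity)]
      refine mul_le_mul ?_ b3 (abs_nonneg _) (sq_nonneg _)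
      calc (a n p q) ^ 2 * ((p : ℝ) / n) ^ (2 * K) * ((q : ℝ) / n) ^ (2 * L)
          ≤ (a n p q) ^ 2 * 1 * 1 := by gcongr
        _ = _ := by ring
    have hs := sq_nonneg (a n p q)
    by_cases h0 : p = 0
    · rw [if_pos h0]
      split_ifs <;> linarith
    · by_cases h1 : q = 0
      · rw [if_neg h0, if_pos h1]; linarith
      · rw [if_neg h0, if_neg h1]; simp [wgt, h0, h1]
  calc _ ≤ ∑ p ∈ Finset.range (n + 1), ∑ q ∈ Finset.range (n + 1),
        3 * ((if p = 0 then (a n p q) ^ 2 else 0) + (if q = 0 then (a n p q) ^ 2 else 0)) := by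
        refine (Finset.abs_sum_le_sum_abs _ _).trans (Finset.sum_le_sum fun p hp => ?_)
        exact (Finset.abs_sum_le_sum_abs _ _).trans (Finset.sum_le_sum fun q hq => hterm p hp q hq)
    _ = _ := by
        simp only [← Finset.mul_sum, Finset.sum_add_distrib]
        congr 2
        · rw [Finset.sum_comm]
          simp
        · simp
end

section
/- lim_{n→∞} ∫_{0}^{π} ( ∫_{0}^{π} T_n((cos x + cos y)/2) dy )² dx = 0. -/
open Real Filter intervalIntegral

lemma rl_aux (S : Set ℝ) (hS : MeasurableSet S) (f : ℝ → ℝ)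
    (hf : MeasureTheory.IntegrableOn f S) :
    Filter.Tendsto (fun n : ℕ => ∫ t in S, f t * Real.cos (n * t)) Filter.atTop (nhds 0) := by
  have h := Real.tendsto_integral_exp_smul_cocompact (fun t => S.indicator (fun t => (f t : ℂ)) t)
  have h1 : Filter.Tendsto (fun n : ℕ => (n : ℝ) * (2 * π)⁻¹) atTop (cocompact ℝ) := by
    refine Filter.Tendsto.mono_right ?_ atTop_le_cocompact
    exact (tendsto_natCast_atTop_atTop).atTop_mul_const (by positivity)
  have h2 := (Complex.continuous_re.tendsto _).comp (h.comp h1)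
  simp only [Complex.zero_re] at h2
  refine h2.congr fun n => ?_
  have hi : MeasureTheory.Integrable (S.indicator (fun t => (f t : ℂ))) := by
    rw [MeasureTheory.integrable_indicator_iff hS]
    exact hf.ofReal
  have hi2 : MeasureTheory.Integrable (fun t : ℝ =>
      (Real.fourierChar (-(t * ((n : ℝ) * (2 * π)⁻¹)))) • S.indicator (fun t => (f t : ℂ)) t) := by
    have := (VectorFourier.fourierIntegral_convergent_iff (μ := MeasureTheory.volume)
      Real.continuous_fourierChar (L := innerₗ ℝ)
      (by exact continuous_inner) ((n : ℝ) * (2 * π)⁻¹)).2 hi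
    simpa [mul_comm] using this
  simp only [Function.comp]
  have h3 := integral_re hi2
  simp only [RCLike.re_eq_complex_re] at h3
  rw [← h3, ← MeasureTheory.integral_indicator hS]
  congr 1
  ext t
  by_cases ht : t ∈ S
  · simp only [Set.indicator_of_mem ht, Circle.smul_def, Real.fourierChar_apply, smul_eq_mul]
    rw [mul_comm, Complex.re_ofReal_mul, Complex.exp_ofReal_mul_I_re]
    congr 1
    rw [← Real.cos_neg]
    congr 1
    field_simp
  · simp [Set.indicator_of_notMem ht]

lemma inner_aux (c : ℝ) (hc : c ∈ Set.Icc (-1 : ℝ) 1) :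
    Filter.Tendsto (fun n : ℕ => ∫ y in (0 : ℝ)..π,
      (Polynomial.Chebyshev.T ℝ n).eval ((c + Real.cos y) / 2)) Filter.atTop (nhds 0) := by
  obtain ⟨hc1, hc2⟩ := hc
  set S : Set ℝ := Set.Ioo 0 π ∩ (fun t => 2 * Real.cos t - c) ⁻¹' Set.Ioo (-1) 1 with hSdef
  have hS : MeasurableSet S :=
    (isOpen_Ioo.inter (isOpen_Ioo.preimage (by fun_prop))).measurableSet
  set ψ : ℝ → ℝ := fun t => Real.arccos (2 * Real.cos t - c) with hψ
  set ψ' : ℝ → ℝ := fun t => -(1 / √(1 - (2 * Real.cos t - c) ^ 2)) * (2 * (-Real.sin t)) with hψ'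
  have hd : ∀ t ∈ S, HasDerivWithinAt ψ (ψ' t) S t := by
    rintro t ⟨ht, h1, h2⟩
    have ha := Real.hasDerivAt_arccos (x := 2 * Real.cos t - c) h1.ne' h2.ne
    have hb : HasDerivAt (fun t => 2 * Real.cos t - c) (2 * (-Real.sin t)) t :=
      ((Real.hasDerivAt_cos t).const_mul 2).sub_const c
    exact (ha.comp t hb).hasDerivWithinAt
  have hinj : Set.InjOn ψ S := by
    rintro s ⟨hs, hs1, hs2⟩ t ⟨ht, ht1, ht2⟩ hst
    have := Real.arccos_injOn ⟨hs1.le, hs2.le⟩ ⟨ht1.le, ht2.le⟩ hst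
    refine Real.injOn_cos ⟨hs.1.le, hs.2.le⟩ ⟨ht.1.le, ht.2.le⟩ ?_
    simp only at this
    linarith
  have himg : ψ '' S = Set.Ioo 0 π := by
    ext y
    constructor
    · rintro ⟨t, ⟨ht, ht1, ht2⟩, rfl⟩
      simp only [Set.mem_Ioo] at *
      refine ⟨Real.arccos_pos.2 ht2, ?_⟩
      refine lt_of_le_of_ne (Real.arccos_le_pi _) fun h => ?_
      have := Real.arccos_eq_pi.1 h
      linarith
    · rintro ⟨h0, hp⟩
      have hcy1 : Real.cos y < 1 := by
        rw [← Real.cos_zero]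
        exact Real.cos_lt_cos_of_nonneg_of_le_pi le_rfl hp.le h0
      have hcy2 : -1 < Real.cos y := by
        rw [← Real.cos_pi]
        exact Real.cos_lt_cos_of_nonneg_of_le_pi h0.le le_rfl hp
      have hcc : Real.cos (Real.arccos ((c + Real.cos y) / 2)) = (c + Real.cos y) / 2 :=
        Real.cos_arccos (by linarith) (by linarith)
      have he : 2 * ((c + Real.cos y) / 2) - c = Real.cos y := by ring
      refine ⟨Real.arccos ((c + Real.cos y) / 2), ⟨⟨Real.arccos_pos.2 (by linarith), ?_⟩, ?_⟩, ?_⟩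
      · refine lt_of_le_of_ne (Real.arccos_le_pi _) fun h => ?_
        have := Real.arccos_eq_pi.1 h
        linarith
      · simp only [Set.mem_preimage, hcc, he]
        exact ⟨hcy2, hcy1⟩
      · simp only [hψ, hcc, he]
        exact Real.arccos_cos h0.le hp.le
  have hint : MeasureTheory.IntegrableOn (fun t => |ψ' t|) S := by
    have := (MeasureTheory.integrableOn_image_iff_integrableOn_abs_deriv_smul hS hd hinj
      (fun _ => (1 : ℝ))).1 (by rw [himg]; simp)
    simpa using this
  refine (rl_aux S hS _ hint).congr fun n => ?_
  rw [intervalIntegral.integral_of_le Real.pi_pos.le, MeasureTheory.integral_Ioc_eq_integral_Ioo,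
    ← himg, MeasureTheory.integral_image_eq_integral_abs_deriv_smul hS hd hinj]
  refine MeasureTheory.setIntegral_congr_fun hS ?_
  rintro t ⟨ht, h1, h2⟩
  simp only [hψ, smul_eq_mul]
  rw [Real.cos_arccos h1.le h2.le]
  have : (c + (2 * Real.cos t - c)) / 2 = Real.cos t := by ring
  rw [this, Polynomial.Chebyshev.T_real_cos]
  simp

/-- `lim_{n→∞} ∫_0^π ( ∫_0^π T_n((cos x + cos y)/2) dy )² dx = 0`. -/
theorem integral_sq_chebyshev_tendsto_zero :
    Filter.Tendsto (fun n : ℕ =>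
        ∫ x in (0 : ℝ)..π,
          (∫ y in (0 : ℝ)..π,
            (Polynomial.Chebyshev.T ℝ n).eval ((Real.cos x + Real.cos y) / 2)) ^ 2)
      Filter.atTop (nhds 0) := by
  have key := intervalIntegral.tendsto_integral_filter_of_dominated_convergence
    (μ := MeasureTheory.volume) (a := 0) (b := π) (l := (atTop : Filter ℕ))
    (F := fun n x => (∫ y in (0 : ℝ)..π,
            (Polynomial.Chebyshev.T ℝ n).eval ((Real.cos x + Real.cos y) / 2)) ^ 2)
    (f := fun _ => (0 : ℝ)) (fun _ => π ^ 2) ?_ ?_ ?_ ?_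
  · simpa using key
  · refine Eventually.of_forall fun n => Continuous.aestronglyMeasurable ?_
    refine Continuous.pow ?_ 2
    apply intervalIntegral.continuous_parametric_intervalIntegral_of_continuous'
    exact (Polynomial.continuous _).comp (by fun_prop)
  · refine Eventually.of_forall fun n => Eventually.of_forall fun x _ => ?_
    rw [norm_pow]
    gcongr
    have := intervalIntegral.norm_integral_le_of_norm_le_const (a := 0) (b := π) (C := 1)
      (f := fun y => (Polynomial.Chebyshev.T ℝ n).eval ((Real.cos x + Real.cos y) / 2)) ?_
    · simpa [abs_of_pos Real.pi_pos] using this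
    · intro y _
      apply Polynomial.Chebyshev.abs_eval_T_real_le_one
      rw [abs_le]
      constructor <;> linarith [Real.cos_le_one x, Real.cos_le_one y, Real.neg_one_le_cos x,
        Real.neg_one_le_cos y]
  · simp
  · refine Eventually.of_forall fun x _ => ?_
    simpa using (inner_aux (Real.cos x) ⟨Real.neg_one_le_cos x, Real.cos_le_one x⟩).pow 2
end

section
/- For every fixed x ∈ (0,π), lim_{n→∞} ∫_{0}^{π} T_n((cos x + cos y)/2) dy = 0. -/
open Real Filter intervalIntegral

open MeasureTheory in
/-- Riemann-Lebesgue for cosines along the natural numbers. -/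
lemma riemann_lebesgue_cos (F : ℝ → ℝ) (hF : Integrable F) :
    Filter.Tendsto (fun n : ℕ => ∫ t : ℝ, F t * Real.cos (n * t)) Filter.atTop (nhds 0) := by
  have h := Real.tendsto_integral_exp_smul_cocompact (fun t => (F t : ℂ))
  have hc : Filter.Tendsto (fun n : ℕ => (n : ℝ) / (2 * π)) Filter.atTop (Filter.cocompact ℝ) :=
    ((tendsto_natCast_atTop_atTop (R := ℝ)).atTop_div_const (by positivity)).mono_right
      atTop_le_cocompact
  have h2 := (Complex.continuous_re.tendsto 0).comp (h.comp hc)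
  rw [Complex.zero_re] at h2
  refine h2.congr fun n => ?_
  simp only [Function.comp]
  have hFc : Integrable (fun t => (F t : ℂ)) := hF.ofReal
  have hint : Integrable (fun t : ℝ => (Real.fourierChar (-(t * ((n:ℝ) / (2 * π)))) • (F t : ℂ))) := by
    refine hFc.mono ?_ ?_
    · refine AEStronglyMeasurable.smul ?_ hFc.1
      have hg : Continuous (fun t : ℝ => -(t * ((n:ℝ) / (2 * π)))) := by fun_prop
      exact (continuous_subtype_val.comp (Real.continuous_fourierChar.comp hg)).aestronglyMeasurable
    · filter_upwards with t
      rw [Circle.smul_def, norm_smul, Circle.norm_coe, one_mul]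
  have h3 := Complex.reCLM.integral_comp_comm hint
  simp only [Complex.reCLM_apply] at h3
  rw [← h3]
  congr 1
  ext t
  rw [Circle.smul_def, Real.fourierChar_apply, smul_eq_mul, mul_comm, Complex.re_ofReal_mul]
  congr 1
  rw [Complex.exp_ofReal_mul_I_re]
  have : 2 * π * -(t * ((n:ℝ) / (2 * π))) = -(n * t) := by
    field_simp
  rw [this, Real.cos_neg]

open MeasureTheory in
/-- for fixed `x ∈ (0,π)`, `lim_{n→∞} ∫_0^π T_n((cos x + cos y)/2) dy = 0`. -/
theorem integral_chebyshev_tendsto_zero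
    (x : ℝ) (hx : x ∈ Set.Ioo 0 π) :
    Filter.Tendsto (fun n : ℕ =>
        ∫ y in (0 : ℝ)..π,
          (Polynomial.Chebyshev.T ℝ n).eval ((Real.cos x + Real.cos y) / 2))
      Filter.atTop (nhds 0) := by
  set s : Set ℝ := Set.Ioo 0 π ∩ (fun t => 2 * Real.cos t - Real.cos x) ⁻¹' Set.Ioo (-1) 1 with hs
  have hsm : MeasurableSet s :=
    (isOpen_Ioo.inter (isOpen_Ioo.preimage (by fun_prop))).measurableSet
  set f : ℝ → ℝ := fun t => Real.arccos (2 * Real.cos t - Real.cos x) with hf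
  set f' : ℝ → ℝ := fun t =>
    -(1 / √(1 - (2 * Real.cos t - Real.cos x) ^ 2)) * (2 * -Real.sin t) with hf'
  have hder : ∀ t ∈ s, HasDerivWithinAt f (f' t) s t := by
    rintro t ⟨_, ht1, ht2⟩
    have h1 := Real.hasDerivAt_arccos (x := 2 * Real.cos t - Real.cos x) ht1.ne' ht2.ne
    exact (h1.comp t (((Real.hasDerivAt_cos t).const_mul 2).sub_const _)).hasDerivWithinAt
  have hinj : Set.InjOn f s := by
    rintro a ⟨ha, ha1, ha2⟩ b ⟨hb, hb1, hb2⟩ hab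
    have h1 := Real.arccos_injOn ⟨ha1.le, ha2.le⟩ ⟨hb1.le, hb2.le⟩ hab
    have h2 : Real.cos a = Real.cos b := by
      simp only at h1
      linarith
    exact Real.injOn_cos (Set.Ioo_subset_Icc_self ha) (Set.Ioo_subset_Icc_self hb) h2
  have hcos : ∀ y ∈ Set.Ioo 0 π, -1 < Real.cos y ∧ Real.cos y < 1 := by
    intro y hy
    constructor
    · have := Real.cos_lt_cos_of_nonneg_of_le_pi hy.1.le le_rfl hy.2
      rwa [Real.cos_pi] at this
    · have := Real.cos_lt_cos_of_nonneg_of_le_pi le_rfl hy.2.le hy.1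
      rwa [Real.cos_zero] at this
  have hcosx := hcos x hx
  have himg : f '' s = Set.Ioo 0 π := by
    ext y
    constructor
    · rintro ⟨t, ⟨_, ht1, ht2⟩, rfl⟩
      exact ⟨Real.arccos_pos.2 ht2,
        lt_of_le_of_ne (Real.arccos_le_pi _) fun h => by
          rw [Real.arccos_eq_pi] at h
          exact absurd ht1 (not_lt.2 h)⟩
    · intro hy
      have hcy := hcos y hy
      have e : Real.cos (Real.arccos ((Real.cos x + Real.cos y) / 2))
          = (Real.cos x + Real.cos y) / 2 :=
        Real.cos_arccos (by linarith) (by linarith)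
      have e2 : 2 * Real.cos (Real.arccos ((Real.cos x + Real.cos y) / 2)) - Real.cos x
          = Real.cos y := by rw [e]; ring
      refine ⟨Real.arccos ((Real.cos x + Real.cos y) / 2), ⟨⟨Real.arccos_pos.2 (by linarith),
        lt_of_le_of_ne (Real.arccos_le_pi _) fun h => ?_⟩, ?_⟩, ?_⟩
      · rw [Real.arccos_eq_pi] at h
        linarith
      · rw [Set.mem_preimage, e2]
        exact hcy
      · simp only [hf]
        rw [e2, Real.arccos_cos hy.1.le hy.2.le]
  have hintF : Integrable (s.indicator fun t => |f' t|) := by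
    rw [integrable_indicator_iff hsm]
    have := (integrableOn_image_iff_integrableOn_abs_deriv_smul hsm hder hinj
      (fun _ => (1:ℝ))).1 (by rw [himg]; simp)
    simpa using this
  refine (riemann_lebesgue_cos _ hintF).congr fun n => ?_
  rw [intervalIntegral.integral_of_le Real.pi_pos.le, integral_Ioc_eq_integral_Ioo, ← himg,
    integral_image_eq_integral_abs_deriv_smul hsm hder hinj, ← MeasureTheory.integral_indicator hsm]
  congr 1
  ext t
  by_cases ht : t ∈ s
  · rw [Set.indicator_of_mem ht, Set.indicator_of_mem ht, smul_eq_mul]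
    congr 1
    have : (Real.cos x + Real.cos (f t)) / 2 = Real.cos t := by
      simp only [hf]
      rw [Real.cos_arccos ht.2.1.le ht.2.2.le]
      ring
    rw [this, Polynomial.Chebyshev.T_real_cos]
    simp
  · rw [Set.indicator_of_notMem ht, Set.indicator_of_notMem ht, zero_mul]
end

section
/- For every x ∈ (0,π) and every n ∈ ℕ, ∫_{0}^{π} T_n((cos x + cos y)/2) dy = 2 ∫_{I_x} cos(n z) · sin z / √(1 − (2 cos z − cos x)²) dz, where I_x = [arccos((cos x + 1)/2), arccos((cos x − 1)/2)]. -/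
open Real Filter intervalIntegral

/-- for `x ∈ (0,π)` and `n ∈ ℕ`,
`∫_0^π T_n((cos x + cos y)/2) dy
  = 2 ∫_{I_x} cos(n z) sin z / √(1 − (2 cos z − cos x)²) dz`,
where `I_x = [arccos((cos x + 1)/2), arccos((cos x − 1)/2)]`. -/
theorem integral_chebyshev_change_of_variables
    (x : ℝ) (hx : x ∈ Set.Ioo 0 π) (n : ℕ) :
    (∫ y in (0 : ℝ)..π,
        (Polynomial.Chebyshev.T ℝ n).eval ((Real.cos x + Real.cos y) / 2)) =
      2 * ∫ z in (Real.arccos ((Real.cos x + 1) / 2))..(Real.arccos ((Real.cos x - 1) / 2)),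
        Real.cos (n * z) * Real.sin z / Real.sqrt (1 - (2 * Real.cos z - Real.cos x) ^ 2) := by
  have h1 : -1 ≤ Real.cos x := Real.neg_one_le_cos x
  have h2 : Real.cos x ≤ 1 := Real.cos_le_one x
  set c := Real.cos x with hc
  set a := Real.arccos ((c + 1) / 2) with ha
  set b := Real.arccos ((c - 1) / 2) with hb
  have hca : Real.cos a = (c + 1) / 2 := Real.cos_arccos (by linarith) (by linarith)
  have hcb : Real.cos b = (c - 1) / 2 := Real.cos_arccos (by linarith) (by linarith)
  have hab : a ≤ b := Real.arccos_le_arccos (by linarith)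
  have ha0 : 0 ≤ a := Real.arccos_nonneg _
  have hbpi : b ≤ π := Real.arccos_le_pi _
  have hrange : ∀ z ∈ Set.Ioo a b, -1 < 2 * Real.cos z - c ∧ 2 * Real.cos z - c < 1 := by
    intro z hz
    have e1 : Real.cos z < Real.cos a :=
      Real.cos_lt_cos_of_nonneg_of_le_pi ha0 (hz.2.le.trans hbpi) hz.1
    have e2 : Real.cos b < Real.cos z :=
      Real.cos_lt_cos_of_nonneg_of_le_pi (ha0.trans hz.1.le) hbpi hz.2
    constructor <;> linarith
  have key := MeasureTheory.integral_Icc_deriv_smul_of_deriv_nonneg (a := a) (b := b)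
    (f := fun z => Real.arccos (2 * Real.cos z - c))
    (f' := fun z => 2 * Real.sin z / Real.sqrt (1 - (2 * Real.cos z - c) ^ 2))
    (g := fun y => (Polynomial.Chebyshev.T ℝ n).eval ((c + Real.cos y) / 2))
    (Continuous.continuousOn (by fun_prop))
    (by
      intro z hz
      obtain ⟨e1, e2⟩ := hrange z hz
      have := (Real.hasDerivAt_arccos (x := 2 * Real.cos z - c) e1.ne' e2.ne).comp z
        (((Real.hasDerivAt_cos z).const_mul 2).sub_const c)
      refine HasDerivAt.congr_deriv this ?_
      ring)
    (by
      intro z hz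
      have := Real.sin_nonneg_of_nonneg_of_le_pi (ha0.trans hz.1.le) (hz.2.le.trans hbpi)
      positivity) hab
  have fa : Real.arccos (2 * Real.cos a - c) = 0 := by
    rw [hca, show 2 * ((c + 1) / 2) - c = 1 by ring, Real.arccos_one]
  have fb : Real.arccos (2 * Real.cos b - c) = π := by
    rw [hcb, show 2 * ((c - 1) / 2) - c = -1 by ring, Real.arccos_neg_one]
  simp only [fa, fb] at key
  rw [intervalIntegral.integral_of_le Real.pi_pos.le, ← MeasureTheory.integral_Icc_eq_integral_Ioc,
    ← key, intervalIntegral.integral_of_le hab, ← MeasureTheory.integral_const_mul,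
    MeasureTheory.integral_Icc_eq_integral_Ioo, MeasureTheory.integral_Ioc_eq_integral_Ioo]
  refine MeasureTheory.setIntegral_congr_fun measurableSet_Ioo ?_
  intro z hz
  obtain ⟨e1, e2⟩ := hrange z hz
  simp only [smul_eq_mul]
  rw [Real.cos_arccos e1.le e2.le, show (c + (2 * Real.cos z - c)) / 2 = Real.cos z by ring,
    Polynomial.Chebyshev.T_real_cos]
  push_cast
  ring
end

section
/- For all K, L ∈ ℕ, lim_{ε→0⁺} sup_{n ≥ 1} (1/n^{2(K+L)}) ∫_{B_ε} ( Σ_{p,q=0}^{n} a_{n,p,q} p^K q^L ξ_K(p x) ξ_L(q y) )² dx dy = 0. -/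
open Real MeasureTheory Finset Filter

/-- `A_ε = {(x,y) ∈ [0,2π]² : |(cos x + cos y)/2| ≤ 1 − ε}`. -/
def goodSet (ε : ℝ) : Set (ℝ × ℝ) :=
  {z | z ∈ Set.Icc (0 : ℝ) (2 * π) ×ˢ Set.Icc (0 : ℝ) (2 * π) ∧
    |(Real.cos z.1 + Real.cos z.2) / 2| ≤ 1 - ε}

/-- `B_ε = [0,2π]² \ A_ε`. -/
def badSet (ε : ℝ) : Set (ℝ × ℝ) :=
  (Set.Icc (0 : ℝ) (2 * π) ×ˢ Set.Icc (0 : ℝ) (2 * π)) \ goodSet ε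


lemma sum_root (N : ℕ) (hN : 0 < N) (m : ℤ) :
    ∑ j ∈ range N, Complex.exp (2 * π * Complex.I / N * j * m) = if (N : ℤ) ∣ m then (N : ℂ) else 0 := by
  have hp := Complex.isPrimitiveRoot_exp N hN.ne'
  set ζ := Complex.exp (2 * π * Complex.I / N) with hζ
  have h1 : ∀ j : ℕ, Complex.exp (2 * π * Complex.I / N * j * m) = (ζ ^ m) ^ j := by
    intro j
    rw [hζ, ← Complex.exp_int_mul, ← Complex.exp_nat_mul]
    congr 1; ring
  simp_rw [h1]
  split_ifs with h
  · rw [(hp.zpow_eq_one_iff_dvd m).2 h]; simp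
  · have hne : ζ ^ m ≠ 1 := fun h' => h ((hp.zpow_eq_one_iff_dvd m).1 h')
    rw [geom_sum_eq hne]
    have : (ζ ^ m) ^ N = 1 := by
      rw [← zpow_natCast, ← zpow_mul, mul_comm, zpow_mul, zpow_natCast, hp.pow_eq_one, one_zpow]
    rw [this]; simp

lemma count_pairs (n p : ℕ) (hp : p ≤ n) :
    ∑ a ∈ range n, ∑ b ∈ range n, (if a + p = b + n then (1:ℂ) else 0) = p := by
  have : ∀ a ∈ range n, ∑ b ∈ range n, (if a + p = b + n then (1:ℂ) else 0)
      = if n - p ≤ a then 1 else 0 := by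
    intro a ha
    rw [mem_range] at ha
    split_ifs with h
    · rw [sum_eq_single_of_mem (a + p - n) (by simp; omega)]
      · rw [if_pos (by omega)]
      · intro b _ hb; rw [if_neg (by omega)]
    · apply sum_eq_zero
      intro b _; rw [if_neg (by omega)]
  rw [sum_congr rfl this, ← sum_filter]
  have : (range n).filter (fun a => n - p ≤ a) = Ico (n-p) n := by
    ext; simp; omega
  rw [this, sum_const, Nat.card_Ico, nsmul_one]; congr 1; omega

/-- Riesz type quadrature for the derivative. -/
lemma exists_weights (n : ℕ) (hn : 1 ≤ n) : ∃ (w t : ℕ → ℝ),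
    (∑ j ∈ range (3 * n), |w j| ≤ 2 * n) ∧
    ∀ p ≤ n, ∑ j ∈ range (3 * n), (w j : ℂ) * Complex.exp (p * t j * Complex.I) = p * Complex.I := by
  let N := 3 * n
  have hN : 0 < N := by omega
  have hNC : (N : ℂ) ≠ 0 := by exact_mod_cast hN.ne'
  let t : ℕ → ℝ := fun j => 2 * π / N * j
  let D : ℕ → ℂ := fun j => ∑ a ∈ range n, Complex.exp (a * t j * Complex.I)
  have hD : ∀ j, (Complex.normSq (D j) : ℂ) = ∑ a ∈ range n, ∑ b ∈ range n,
      Complex.exp (2 * π * Complex.I / N * j * ((a - b : ℤ) : ℂ)) := by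
    intro j
    rw [← Complex.mul_conj]
    simp only [D, map_sum, sum_mul_sum]
    refine sum_congr rfl fun a _ => sum_congr rfl fun b _ => ?_
    rw [← Complex.exp_conj, ← Complex.exp_add]
    congr 1
    simp [t, map_ofNat (starRingEnd ℂ) 2]
    ring
  refine ⟨fun j => 2 * Real.sin (n * t j) * Complex.normSq (D j) / N, t, ?_, ?_⟩
  · have h1 : ∑ j ∈ range N, Complex.normSq (D j) = N * n := by
      have : ((∑ j ∈ range N, Complex.normSq (D j) : ℝ) : ℂ) = ((N * n : ℝ) : ℂ) := by
        push_cast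
        simp_rw [hD]
        rw [sum_comm]
        simp_rw [sum_comm (s := range N)]
        simp_rw [sum_root N hN]
        have : ∀ a ∈ range n, ∑ b ∈ range n, (if (N : ℤ) ∣ (a - b : ℤ) then (N : ℂ) else 0) = N := by
          intro a ha
          rw [sum_eq_single_of_mem a ha]
          · simp
          · intro b hb hba
            rw [if_neg]
            rintro ⟨c, hc⟩
            simp only [mem_range] at ha hb
            have : c = 0 := by
              have h1 : (N:ℤ) * c < N * 1 := by omega
              have h2 : (N:ℤ) * (-1) < N * c := by omega
              have h3 := lt_of_mul_lt_mul_left h1 (by omega)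
              have h4 := lt_of_mul_lt_mul_left h2 (by omega)
              omega
            subst this; omega
        rw [sum_congr rfl this]; simp [mul_comm]
      exact_mod_cast this
    have hNR : (0:ℝ) < N := by exact_mod_cast hN
    calc _ ≤ ∑ j ∈ range N, (2 / N) * Complex.normSq (D j) := by
          refine sum_le_sum fun j _ => ?_
          rw [abs_div, abs_mul, abs_mul, abs_of_nonneg (Complex.normSq_nonneg _), abs_two, abs_of_pos hNR]
          have := Complex.normSq_nonneg (D j)
          have h2 := Real.abs_sin_le_one (n * t j)
          rw [div_mul_eq_mul_div]
          gcongr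
          nlinarith
      _ = _ := by rw [← mul_sum, h1]; field_simp
  · intro p hp
    have key : ∀ j, (((2 * Real.sin (n * t j) * Complex.normSq (D j) / N : ℝ)) : ℂ) * Complex.exp (p * t j * Complex.I)
        = (Complex.I / N) * ∑ a ∈ range n, ∑ b ∈ range n,
          (Complex.exp (2 * π * Complex.I / N * j * ((p - n + a - b : ℤ) : ℂ))
           - Complex.exp (2 * π * Complex.I / N * j * ((p + n + a - b : ℤ) : ℂ))) := by
      intro j
      push_cast
      rw [hD, Complex.sin]
      simp only [mul_sum, sum_mul, sum_div]
      refine sum_congr rfl fun a _ => sum_congr rfl fun b _ => ?_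
      have e1 : Complex.exp (2 * π * Complex.I / N * j * (p - n + a - b))
        = Complex.exp (-(n * t j) * Complex.I) * Complex.exp (2 * π * Complex.I / N * j * ((a - b : ℤ) : ℂ)) * Complex.exp (p * t j * Complex.I) := by
        rw [← Complex.exp_add, ← Complex.exp_add]; congr 1; simp [t]; ring
      have e2 : Complex.exp (2 * π * Complex.I / N * j * (p + n + a - b))
        = Complex.exp ((n * t j) * Complex.I) * Complex.exp (2 * π * Complex.I / N * j * ((a - b : ℤ) : ℂ)) * Complex.exp (p * t j * Complex.I) := by
        rw [← Complex.exp_add, ← Complex.exp_add]; congr 1; simp [t]; ring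
      rw [e1, e2]; ring
    simp only [key]
    rw [← mul_sum, sum_comm]
    simp_rw [sum_comm (s := range (3 * n)), sum_sub_distrib]
    change Complex.I / N * (∑ a ∈ range n, ∑ b ∈ range n, ∑ j ∈ range N, _ - ∑ a ∈ range n, ∑ b ∈ range n, ∑ j ∈ range N, _) = _
    simp_rw [sum_root N hN]
    rw [← sum_sub_distrib]
    have c1 : ∀ a ∈ range n, (∑ b ∈ range n, (if (N : ℤ) ∣ (p - n + a - b : ℤ) then (N : ℂ) else 0)
        - ∑ b ∈ range n, (if (N : ℤ) ∣ (p + n + a - b : ℤ) then (N : ℂ) else 0)) =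
        N * ∑ b ∈ range n, (if a + p = b + n then (1:ℂ) else 0) := by
      intro a ha
      rw [← sum_sub_distrib, mul_sum]
      refine sum_congr rfl fun b hb => ?_
      simp only [mem_range] at ha hb
      rw [if_neg (c := (N : ℤ) ∣ (p + n + a - b : ℤ))]
      · rw [sub_zero, mul_ite, mul_one, mul_zero]
        refine if_congr ⟨?_, ?_⟩ rfl rfl
        · rintro ⟨c, hc⟩
          have : c = 0 := by
            have h1 : (N:ℤ) * c < N * 1 := by omega
            have h2 : (N:ℤ) * (-1) < N * c := by omega
            have h3 := lt_of_mul_lt_mul_left h1 (by omega)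
            have h4 := lt_of_mul_lt_mul_left h2 (by omega)
            omega
          subst this; omega
        · intro h
          have : (p - n + a - b : ℤ) = 0 := by omega
          rw [this]; exact dvd_zero _
      · rintro ⟨c, hc⟩
        have h1 : (N:ℤ) * c < N * 1 := by omega
        have h2 : (N:ℤ) * 0 < N * c := by omega
        have h3 := lt_of_mul_lt_mul_left h1 (by omega)
        have h4 := lt_of_mul_lt_mul_left h2 (by omega)
        omega
    rw [sum_congr rfl c1, ← mul_sum, count_pairs n p hp]
    field_simp

lemma bernstein_trig (n : ℕ) (hn : 1 ≤ n) (c φ : ℕ → ℝ) (M : ℝ)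
    (h : ∀ x : ℝ, |∑ p ∈ range (n+1), c p * Real.cos (p * x + φ p)| ≤ M) (x : ℝ) :
    |∑ p ∈ range (n+1), c p * p * Real.cos (p * x + φ p + π / 2)| ≤ 2 * n * M := by
  obtain ⟨w, t, hw, ht⟩ := exists_weights n hn
  have hM : 0 ≤ M := (abs_nonneg _).trans (h 0)
  have h1 : ∀ p ≤ n, ∀ θ : ℝ, ∑ j ∈ range (3 * n), w j * Real.cos (θ + p * t j) = p * Real.cos (θ + π / 2) := by
    intro p hp θ
    have := congrArg (fun z => (Complex.exp (θ * Complex.I) * z).re) (ht p hp)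
    simp only [mul_sum, Complex.re_sum] at this
    rw [Real.cos_add_pi_div_two]
    convert this using 1
    · refine sum_congr rfl fun j _ => ?_
      rw [mul_left_comm, ← Complex.exp_add, ← add_mul, Complex.re_ofReal_mul]
      have : (θ + p * t j : ℂ) = ((θ + p * t j : ℝ) : ℂ) := by push_cast; rfl
      rw [this, Complex.exp_ofReal_mul_I_re]
    · simp [Complex.exp_ofReal_mul_I_im, Complex.exp_ofReal_mul_I_re]; ring
  have h2 : ∑ p ∈ range (n+1), c p * p * Real.cos (p * x + φ p + π / 2)
      = ∑ j ∈ range (3 * n), w j * ∑ p ∈ range (n+1), c p * Real.cos (p * (x + t j) + φ p) := by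
    simp_rw [mul_sum]
    rw [sum_comm]
    refine sum_congr rfl fun p hp => ?_
    rw [mul_assoc, ← h1 p (by simp at hp; omega), mul_sum]
    refine sum_congr rfl fun j _ => ?_
    rw [show (p * (x + t j) + φ p : ℝ) = p * x + φ p + p * t j by ring]; ring
  rw [h2]
  calc _ ≤ ∑ j ∈ range (3 * n), |w j| * M := by
        refine (abs_sum_le_sum_abs _ _).trans (sum_le_sum fun j _ => ?_)
        rw [abs_mul]
        exact mul_le_mul_of_nonneg_left (h _) (abs_nonneg _)
    _ ≤ _ := by rw [← sum_mul]; gcongr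

lemma iterCos (K : ℕ) : iteratedDeriv K Real.cos = fun x => Real.cos (x + K * (π / 2)) := by
  induction K with
  | zero => simp
  | succ k ih =>
    rw [iteratedDeriv_succ, ih]
    funext x
    rw [deriv_comp_add_const (f := Real.cos), Real.deriv_cos]
    rw [← Real.cos_add_pi_div_two]; congr 1; push_cast; ring

lemma bound (n : ℕ) (hn : 1 ≤ n) (a : ℕ → ℕ → ℝ)
    (h : ∀ x y : ℝ, |∑ p ∈ range (n+1), ∑ q ∈ range (n+1), a p q * Real.cos (p * x) * Real.cos (q * y)| ≤ 1)
    (K L : ℕ) : ∀ x y : ℝ,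
    |∑ p ∈ range (n+1), ∑ q ∈ range (n+1), a p q * (p:ℝ)^K * (q:ℝ)^L *
      Real.cos (p * x + K * (π/2)) * Real.cos (q * y + L * (π/2))| ≤ (2 * n) ^ (K + L) := by
  have hK : ∀ x y : ℝ,
    |∑ p ∈ range (n+1), ∑ q ∈ range (n+1), a p q * (p:ℝ)^K *
      Real.cos (p * x + K * (π/2)) * Real.cos (q * y)| ≤ (2 * n) ^ K := by
    induction K with
    | zero => simpa using h
    | succ k ih =>
      intro x y
      have := bernstein_trig n hn (fun p => ∑ q ∈ range (n+1), a p q * (p:ℝ)^k * Real.cos (q * y))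
        (fun p => k * (π/2)) ((2 * n)^k) (fun x => by
          refine le_of_eq_of_le ?_ (ih x y)
          congr 1
          refine sum_congr rfl fun p _ => ?_
          rw [sum_mul]
          refine sum_congr rfl fun q _ => ?_
          ring) x
      rw [pow_succ' (2 * (n:ℝ))]
      refine le_of_eq_of_le ?_ this
      congr 1
      refine sum_congr rfl fun p _ => ?_
      rw [sum_mul, sum_mul]
      refine sum_congr rfl fun q _ => ?_
      rw [show (p * x + ((k+1 : ℕ):ℝ) * (π/2) : ℝ) = p * x + k * (π/2) + π/2 by push_cast; ring]
      ring
  induction L with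
  | zero => simpa using hK
  | succ k ih =>
    intro x y
    have := bernstein_trig n hn (fun q => ∑ p ∈ range (n+1), a p q * (p:ℝ)^K * (q:ℝ)^k * Real.cos (p * x + K * (π/2)))
        (fun p => k * (π/2)) ((2 * n)^(K+k)) (fun y => by
          refine le_of_eq_of_le ?_ (ih x y)
          congr 1
          rw [sum_comm]
          refine sum_congr rfl fun p _ => ?_
          rw [sum_mul]) y
    rw [← add_assoc, pow_succ' (2 * (n:ℝ))]
    refine le_of_eq_of_le ?_ this
    congr 1
    rw [sum_comm]
    refine sum_congr rfl fun p _ => ?_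
    rw [sum_mul, sum_mul]
    refine sum_congr rfl fun q _ => ?_
    rw [show (p * y + ((k+1 : ℕ):ℝ) * (π/2) : ℝ) = p * y + k * (π/2) + π/2 by push_cast; ring]
    ring

lemma volume_small (η : ENNReal) (hη : 0 < η) : ∃ ε₀ > (0:ℝ), volume (badSet ε₀) < η := by
  have hcl : ∀ ε, MeasurableSet (badSet ε) := by
    intro ε
    have hm : MeasurableSet (Set.Icc (0 : ℝ) (2 * π) ×ˢ Set.Icc (0 : ℝ) (2 * π)) :=
      measurableSet_Icc.prod measurableSet_Icc
    refine hm.diff (hm.inter ?_)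
    have hc : Continuous fun z : ℝ × ℝ => |(Real.cos z.1 + Real.cos z.2) / 2| := by fun_prop
    exact (isClosed_le hc (continuous_const (y := 1 - ε))).measurableSet
  let s : ℕ → Set (ℝ × ℝ) := fun k => badSet (1 / ((k:ℝ) + 1))
  have hanti : Antitone s := by
    intro i j hij z hz
    refine ⟨hz.1, fun h => hz.2 ⟨h.1, h.2.trans ?_⟩⟩
    have : 1 / ((j:ℝ) + 1) ≤ 1 / ((i:ℝ) + 1) := by gcongr
    linarith
  have hfin : ∀ ε, volume (badSet ε) ≠ ⊤ := by
    intro ε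
    refine measure_ne_top_of_subset Set.diff_subset ?_
    exact (isCompact_Icc.prod isCompact_Icc).measure_lt_top.ne
  have hT := tendsto_measure_iInter_atTop (μ := volume) (s := s)
    (fun i => (hcl _).nullMeasurableSet) hanti ⟨0, hfin _⟩
  have h0 : volume (⋂ k, s k) = 0 := by
    have hc : ({x : ℝ | Real.sin x = 0}).Countable := by
      have : {x : ℝ | Real.sin x = 0} = Set.range (fun n : ℤ => (n:ℝ) * π) := by
        ext x; simp [Real.sin_eq_zero_iff]
      rw [this]; exact Set.countable_range _
    refine measure_mono_null (t := {x : ℝ | Real.sin x = 0} ×ˢ Set.univ) ?_ ?_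
    · intro z hz
      rw [Set.mem_iInter] at hz
      have h1 : 1 ≤ |(Real.cos z.1 + Real.cos z.2) / 2| := by
        have : Tendsto (fun k : ℕ => 1 - 1 / ((k:ℝ) + 1)) atTop (nhds (1 - 0)) :=
          tendsto_const_nhds.sub tendsto_one_div_add_atTop_nhds_zero_nat
        rw [sub_zero] at this
        refine le_of_tendsto' this fun k => ?_
        by_contra hlt
        exact (hz k).2 ⟨(hz k).1, (not_le.1 hlt).le⟩
      refine ⟨?_, Set.mem_univ _⟩
      show Real.sin z.1 = 0
      rw [Real.sin_eq_zero_iff_cos_eq]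
      have := Real.neg_one_le_cos z.1
      have := Real.neg_one_le_cos z.2
      have := Real.cos_le_one z.1
      have := Real.cos_le_one z.2
      rcases le_abs.1 h1 with h | h
      · left; linarith
      · right; linarith
    · rw [Measure.volume_eq_prod, Measure.prod_prod, hc.measure_zero, zero_mul]
  rw [h0] at hT
  obtain ⟨k, hk⟩ := (hT.eventually_lt_const hη).exists
  exact ⟨1 / ((k:ℝ) + 1), by positivity, hk⟩

/-- `lim_{ε→0⁺} sup_{n≥1} (1/n^{2(K+L)}) ∫_{B_ε}
  (Σ_{p,q} a_{n,p,q} p^K q^L ξ_K(px) ξ_L(qy))² dx dy = 0`,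
where `ξ_r` is the `r`-th derivative of cosine (stated in `ε`-`δ` form). -/
theorem boundary_region_negligible
    (a : ℕ → ℕ → ℕ → ℝ)
    (ha : ∀ (n : ℕ) (x y : ℝ),
      (Polynomial.Chebyshev.T ℝ n).eval ((Real.cos x + Real.cos y) / 2) =
        ∑ p ∈ Finset.range (n + 1), ∑ q ∈ Finset.range (n + 1),
          a n p q * Real.cos (p * x) * Real.cos (q * y))
    (K L : ℕ) :
    ∀ δ > (0 : ℝ), ∃ ε₀ > (0 : ℝ), ∀ ε : ℝ, 0 < ε → ε < ε₀ →
      ∀ n : ℕ, 1 ≤ n →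
        ((n : ℝ) ^ (2 * (K + L)))⁻¹ *
            (∫ z in badSet ε,
              (∑ p ∈ Finset.range (n + 1), ∑ q ∈ Finset.range (n + 1),
                a n p q * (p : ℝ) ^ K * (q : ℝ) ^ L *
                  iteratedDeriv K Real.cos (p * z.1) *
                  iteratedDeriv L Real.cos (q * z.2)) ^ 2) < δ := by
  intro δ hδ
  obtain ⟨ε₀, hε₀, hv⟩ := volume_small (ENNReal.ofReal (δ / 4 ^ (K + L)))
    (by rw [ENNReal.ofReal_pos]; positivity)
  refine ⟨ε₀, hε₀, fun ε hε hlt n hn => ?_⟩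
  have hsub : badSet ε ⊆ badSet ε₀ :=
    fun z hz => ⟨hz.1, fun h => hz.2 ⟨h.1, h.2.trans (by linarith)⟩⟩
  have hv' : volume (badSet ε) < ENNReal.ofReal (δ / 4 ^ (K + L)) :=
    (measure_mono hsub).trans_lt hv
  have hvr : volume.real (badSet ε) < δ / 4 ^ (K + L) := by
    rw [Measure.real]
    exact (ENNReal.lt_ofReal_iff_toReal_lt (hv'.trans_le le_top).ne).1 hv'
  have hb := bound n hn (a n) (fun x y => by
    rw [← ha n x y]
    apply Polynomial.Chebyshev.abs_eval_T_real_le_one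
    have := Real.neg_one_le_cos x
    have := Real.neg_one_le_cos y
    have := Real.cos_le_one x
    have := Real.cos_le_one y
    rw [abs_le]; constructor <;> linarith) K L
  simp only [iterCos]
  have hn0 : (0:ℝ) < n := by exact_mod_cast hn
  have hI := norm_setIntegral_le_of_norm_le_const (μ := volume) (s := badSet ε)
    (f := fun z : ℝ × ℝ => (∑ p ∈ Finset.range (n + 1), ∑ q ∈ Finset.range (n + 1),
                a n p q * (p : ℝ) ^ K * (q : ℝ) ^ L *
                  Real.cos (p * z.1 + K * (π / 2)) *
                  Real.cos (q * z.2 + L * (π / 2))) ^ 2) (C := ((2 * n) ^ (K + L)) ^ 2)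
    (hv'.trans_le le_top) (fun z _ => by
      rw [Real.norm_eq_abs, abs_pow]
      exact pow_le_pow_left₀ (abs_nonneg _) (hb z.1 z.2) 2)
  have hI' := (le_abs_self _).trans hI
  calc _ ≤ ((n : ℝ) ^ (2 * (K + L)))⁻¹ * (((2 * n) ^ (K + L)) ^ 2 * volume.real (badSet ε)) := by
        gcongr
    _ = 4 ^ (K + L) * volume.real (badSet ε) := by
        rw [← pow_mul, mul_comm (K + L) 2, mul_pow, pow_mul 2 2 (K + L)]
        field_simp
        norm_num
        ring
    _ < 4 ^ (K + L) * (δ / 4 ^ (K + L)) := by gcongr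
    _ = δ := by field_simp
end

section
/- For all K, L ∈ ℕ and every fixed ε ∈ (0,1), lim_{n→∞} [ (1/(π² n^{2(K+L)})) ∫_{A_ε} (∂_x^K ∂_y^L h_n(x,y))² dx dy − I_{K,L}(ε,n) ] = 0, where I_{K,L}(ε,n) = (1/(π² n^{2(K+L)})) ∫_{A_ε} ( T_n^{(K+L)}((cos x + cos y)/2) · (−sin x / 2)^K · (−sin y / 2)^L )² dx dy. -/
open Real MeasureTheory Filter Polynomial

/-- `I_{K,L}(ε,n) = (1/(π² n^{2(K+L)})) ∫_{A_ε}
  (T_n^{(K+L)}((cos x + cos y)/2) (−sin x/2)^K (−sin y/2)^L)² dx dy`. -/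
noncomputable def mainTermIntegral (K L : ℕ) (ε : ℝ) (n : ℕ) : ℝ :=
  (π ^ 2 * (n : ℝ) ^ (2 * (K + L)))⁻¹ *
    ∫ z in goodSet ε,
      ((Polynomial.derivative^[K + L] (Polynomial.Chebyshev.T ℝ n)).eval
          ((Real.cos z.1 + Real.cos z.2) / 2) *
        (-Real.sin z.1 / 2) ^ K * (-Real.sin z.2 / 2) ^ L) ^ 2

/-- Coefficients in the expansion of the iterated derivative of `p((a + cos y)/2)`. -/
noncomputable def fsCoef : ℕ → ℕ → ℝ → ℝ
  | 0, 0 => fun _ => 1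
  | 0, _ + 1 => fun _ => 0
  | L + 1, 0 => deriv (fsCoef L 0)
  | L + 1, j + 1 => fun y => deriv (fsCoef L (j + 1)) y + fsCoef L j y * (-Real.sin y / 2)

theorem fsCoef_contDiff (L : ℕ) : ∀ j, ContDiff ℝ (⊤ : ℕ∞) (fsCoef L j) := by
  induction L with
  | zero =>
    intro j
    cases j with
    | zero => exact contDiff_const
    | succ j => exact contDiff_const
  | succ L ih =>
    have hd : ∀ j, ContDiff ℝ (⊤ : ℕ∞) (deriv (fsCoef L j)) := fun j =>
      (contDiff_infty_iff_deriv.1 (ih j)).2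
    intro j
    cases j with
    | zero => exact hd 0
    | succ j =>
      have h1 := hd (j + 1)
      have h2 := ih j
      have h3 : ContDiff ℝ (⊤ : ℕ∞) (fun y : ℝ => -Real.sin y / 2) :=
        (Real.contDiff_sin.neg).div_const 2
      exact h1.add (h2.mul h3)

theorem fsCoef_gt (L : ℕ) : ∀ j, L < j → fsCoef L j = fun _ => 0 := by
  induction L with
  | zero =>
    intro j hj
    cases j with
    | zero => omega
    | succ j => rfl
  | succ L ih =>
    intro j hj
    cases j with
    | zero => omega
    | succ j =>
      funext y
      simp [fsCoef, ih (j + 1) (by omega), ih j (by omega)]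

theorem fsCoef_self (L : ℕ) : fsCoef L L = fun y => (-Real.sin y / 2) ^ L := by
  induction L with
  | zero => funext y; simp [fsCoef]
  | succ L ih =>
    funext y
    simp [fsCoef, ih, fsCoef_gt L (L + 1) (by omega), pow_succ]

theorem fs_expand (a : ℝ) (p : ℝ[X]) (L : ℕ) :
    iteratedDeriv L (fun y => p.eval ((a + Real.cos y) / 2)) = fun y =>
      ∑ j ∈ Finset.range (L + 1),
        fsCoef L j y * (derivative^[j] p).eval ((a + Real.cos y) / 2) := by
  induction L with
  | zero => funext y; simp [fsCoef]
  | succ L ih =>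
    rw [iteratedDeriv_succ, ih]
    funext y
    have hE : ∀ j, HasDerivAt (fun y => (derivative^[j] p).eval ((a + Real.cos y) / 2))
        ((derivative^[j + 1] p).eval ((a + Real.cos y) / 2) * (-Real.sin y / 2)) y := by
      intro j
      have h1 : HasDerivAt (fun y => (a + Real.cos y) / 2) (-Real.sin y / 2) y :=
        ((Real.hasDerivAt_cos y).const_add a).div_const 2
      have h2 := (derivative^[j] p).hasDerivAt ((a + Real.cos y) / 2)
      rw [Function.iterate_succ_apply']
      exact h2.comp y h1
    have hc : ∀ j, HasDerivAt (fsCoef L j) (deriv (fsCoef L j) y) y := fun j =>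
      ((fsCoef_contDiff L j).differentiable (by simp) y).hasDerivAt
    have hs := HasDerivAt.fun_sum (u := Finset.range (L + 1)) (fun j _ => (hc j).mul (hE j))
    refine hs.deriv.trans ?_
    rw [Finset.sum_range_succ' _ (L + 1), Finset.sum_add_distrib, Finset.sum_range_succ']
    simp only [fsCoef, add_mul, Finset.sum_add_distrib]
    rw [Finset.sum_range_succ _ L]
    have : ∀ j, fsCoef L j y * (eval ((a + Real.cos y) / 2) (derivative^[j + 1] p) *
        (-Real.sin y / 2)) = fsCoef L j y * (-Real.sin y / 2) *
          eval ((a + Real.cos y) / 2) (derivative^[j + 1] p) := fun j => by ring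
    simp only [this, Finset.sum_range_succ _ L, fsCoef_gt L (L + 1) (by omega), deriv_const]
    ring

theorem fs_mixed (K L n : ℕ) (x y : ℝ) :
    mixedPartial K L (hFun n) x y = ∑ q ∈ Finset.range (K + 1) ×ˢ Finset.range (L + 1),
      fsCoef L q.2 y * fsCoef K q.1 x *
        (derivative^[q.1 + q.2] (Chebyshev.T ℝ n)).eval ((Real.cos x + Real.cos y) / 2) := by
  unfold mixedPartial
  have h1 : (fun x' => iteratedDeriv L (hFun n x') y) = fun x' =>
      ∑ j ∈ Finset.range (L + 1), fsCoef L j y *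
        (derivative^[j] (Chebyshev.T ℝ n)).eval ((Real.cos y + Real.cos x') / 2) := by
    funext x'
    have := congrFun (fs_expand (Real.cos x') (Chebyshev.T ℝ n) L) y
    rw [add_comm (Real.cos y)]
    exact this
  have hcd : ∀ j, ContDiff ℝ K (fun x' =>
      (derivative^[j] (Chebyshev.T ℝ n)).eval ((Real.cos y + Real.cos x') / 2)) := by
    intro j
    exact (show ContDiff ℝ K (fun u => (derivative^[j] (Chebyshev.T ℝ n)).eval u) by
        simpa using (derivative^[j] (Chebyshev.T ℝ n)).contDiff_aeval (𝕜 := ℝ) K).comp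
      ((contDiff_const.add Real.contDiff_cos).div_const 2)
  rw [h1, iteratedDeriv_fun_sum (fun j _ => (contDiff_const.mul (hcd j)).contDiffAt),
    Finset.sum_product_right]
  refine Finset.sum_congr rfl fun j _ => ?_
  rw [iteratedDeriv_const_mul_field, fs_expand, Finset.mul_sum]
  refine Finset.sum_congr rfl fun i _ => ?_
  rw [← Function.iterate_add_apply, add_comm (Real.cos y)]
  ring

theorem fs_bound (ε : ℝ) (hε : ε ∈ Set.Ioo (0 : ℝ) 1) (k : ℕ) :
    (∃ C : ℝ, 0 ≤ C ∧ ∀ n : ℕ, 1 ≤ n → ∀ u : ℝ, |u| ≤ 1 - ε →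
      |(derivative^[k] (Chebyshev.T ℝ n)).eval u| ≤ C * (n : ℝ) ^ k) ∧
    (∃ C : ℝ, 0 ≤ C ∧ ∀ n : ℕ, 1 ≤ n → ∀ u : ℝ, |u| ≤ 1 - ε →
      |(derivative^[k + 1] (Chebyshev.T ℝ n)).eval u| ≤ C * (n : ℝ) ^ (k + 1)) := by
  obtain ⟨h0, h1⟩ := hε
  have hu2 : ∀ u : ℝ, |u| ≤ 1 - ε → ε ≤ 1 - u ^ 2 := by
    intro u hu
    rw [← sq_abs]
    nlinarith [abs_nonneg u]
  induction k with
  | zero =>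
    constructor
    · refine ⟨1, zero_le_one, fun n _ u hu => ?_⟩
      simpa using Chebyshev.abs_eval_T_real_le_one n (x := u) (by linarith)
    · refine ⟨ε⁻¹, by positivity, fun n hn u hu => ?_⟩
      have hs := hu2 u hu
      have hb := abs_le.1 (show |u| ≤ 1 by linarith)
      have hU := Chebyshev.U_real_cos (Real.arccos u) ((n : ℤ) - 1)
      rw [Real.cos_arccos hb.1 hb.2, Real.sin_arccos] at hU
      have hsq : ε ≤ √(1 - u ^ 2) := by
        apply Real.le_sqrt_of_sq_le
        nlinarith
      have hle : |(Chebyshev.U ℝ ((n : ℤ) - 1)).eval u| * ε ≤ 1 := by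
        calc _ ≤ |(Chebyshev.U ℝ ((n : ℤ) - 1)).eval u| * √(1 - u ^ 2) := by gcongr
          _ = |(Chebyshev.U ℝ ((n : ℤ) - 1)).eval u * √(1 - u ^ 2)| := by
            rw [abs_mul, abs_of_nonneg (Real.sqrt_nonneg _)]
          _ ≤ 1 := by rw [hU]; exact Real.abs_sin_le_one _
      have hle' : |(Chebyshev.U ℝ ((n : ℤ) - 1)).eval u| ≤ ε⁻¹ := by
        rw [inv_eq_one_div, le_div_iff₀ h0]; exact hle
      simp only [zero_add, Function.iterate_one, pow_one, Chebyshev.T_derivative_eq_U]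
      simp only [eval_mul, Int.cast_natCast, eval_natCast, abs_mul, Nat.abs_cast]
      rw [mul_comm]
      gcongr
  | succ k ih =>
    refine ⟨ih.2, ?_⟩
    obtain ⟨⟨A, hA0, hA⟩, ⟨B, hB0, hB⟩⟩ := ih
    refine ⟨((2 * k + 1) * B + (1 + k ^ 2) * A) / ε, by positivity, fun n hn u hu => ?_⟩
    have hs := hu2 u hu
    have hA' := hA n hn u hu
    have hB' := hB n hn u hu
    have hode := Chebyshev.one_sub_X_sq_mul_iterate_derivative_T_eval (R := ℝ) n k u
    rw [show k + 1 + 1 = k + 2 from rfl, div_mul_eq_mul_div, le_div_iff₀ h0]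
    have hn1 : (1 : ℝ) ≤ n := by exact_mod_cast hn
    set D2 := (derivative^[k + 2] (Chebyshev.T ℝ n)).eval u
    set D1 := (derivative^[k + 1] (Chebyshev.T ℝ n)).eval u
    set D0 := (derivative^[k] (Chebyshev.T ℝ n)).eval u
    push_cast at hode
    have e1 : |(2 * (k : ℝ) + 1) * u * D1| ≤ (2 * k + 1) * (B * (n : ℝ) ^ (k + 2)) := by
      rw [abs_mul, abs_mul, abs_of_nonneg (by positivity : (0 : ℝ) ≤ 2 * k + 1), mul_assoc]
      refine mul_le_mul_of_nonneg_left ?_ (by positivity)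
      calc |u| * |D1| ≤ 1 * (B * (n : ℝ) ^ (k + 1)) := by
            gcongr; linarith
        _ ≤ B * (n : ℝ) ^ (k + 2) := by
            rw [one_mul]; gcongr
            omega
    have e2 : |((n : ℝ) ^ 2 - (k : ℝ) ^ 2) * D0| ≤ (1 + k ^ 2) * (A * (n : ℝ) ^ (k + 2)) := by
      rw [abs_mul]
      have : |(n : ℝ) ^ 2 - (k : ℝ) ^ 2| ≤ (1 + (k : ℝ) ^ 2) * (n : ℝ) ^ 2 := by
        have hn2 : (1 : ℝ) ≤ (n : ℝ) ^ 2 := one_le_pow₀ hn1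
        have hk : (0 : ℝ) ≤ (k : ℝ) ^ 2 := by positivity
        rw [abs_le]; constructor <;> nlinarith
      calc _ ≤ ((1 + (k : ℝ) ^ 2) * (n : ℝ) ^ 2) * (A * (n : ℝ) ^ k) := by gcongr
        _ = _ := by ring
    calc |D2| * ε ≤ |D2| * (1 - u ^ 2) := by gcongr
      _ = |(1 - u ^ 2) * D2| := by
        rw [abs_mul, abs_of_nonneg (by linarith : 0 ≤ 1 - u ^ 2), mul_comm]
      _ ≤ _ := by
        rw [hode]
        refine (abs_sub _ _).trans ((add_le_add e1 e2).trans (le_of_eq ?_))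
        ring

theorem fs_compact (ε : ℝ) : IsCompact (goodSet ε) := by
  have h : IsCompact (Set.Icc (0 : ℝ) (2 * π) ×ˢ Set.Icc (0 : ℝ) (2 * π)) :=
    isCompact_Icc.prod isCompact_Icc
  have hc : IsClosed {z : ℝ × ℝ | |(Real.cos z.1 + Real.cos z.2) / 2| ≤ 1 - ε} :=
    isClosed_le (by fun_prop) continuous_const
  exact h.inter_right hc

/-- for fixed `ε ∈ (0,1)`,
`lim_{n→∞} [(1/(π² n^{2(K+L)})) ∫_{A_ε} (∂_x^K ∂_y^L h_n)² − I_{K,L}(ε,n)] = 0`. -/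
theorem first_simplification
    (K L : ℕ) (ε : ℝ) (hε : ε ∈ Set.Ioo (0 : ℝ) 1) :
    Filter.Tendsto (fun n : ℕ =>
        (π ^ 2 * (n : ℝ) ^ (2 * (K + L)))⁻¹ *
            (∫ z in goodSet ε, (mixedPartial K L (hFun n) z.1 z.2) ^ 2) -
          mainTermIntegral K L ε n)
      Filter.atTop (nhds 0) := by
  classical
  have hcc : ∀ L j, Continuous (fsCoef L j) := fun L j => (fsCoef_contDiff L j).continuous
  let t : ℕ → ℕ × ℕ → ℝ × ℝ → ℝ := fun n q z =>
    fsCoef L q.2 z.2 * fsCoef K q.1 z.1 *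
      (derivative^[q.1 + q.2] (Chebyshev.T ℝ n)).eval ((Real.cos z.1 + Real.cos z.2) / 2)
  have htc : ∀ n q, Continuous (t n q) := by
    intro n q
    have h1 := (hcc L q.2).comp (continuous_snd (X := ℝ) (Y := ℝ))
    have h2 := (hcc K q.1).comp (continuous_fst (X := ℝ) (Y := ℝ))
    have h3 := (derivative^[q.1 + q.2] (Chebyshev.T ℝ n)).continuous.comp
      (show Continuous (fun z : ℝ × ℝ => (Real.cos z.1 + Real.cos z.2) / 2) by fun_prop)
    exact (h1.mul h2).mul h3
  have hB : ∀ q : ℕ × ℕ, ∃ B : ℝ, 0 ≤ B ∧ ∀ n : ℕ, 1 ≤ n → ∀ z ∈ goodSet ε,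
      |t n q z| ≤ B * (n : ℝ) ^ (q.1 + q.2) := by
    intro q
    obtain ⟨C, hC0, hC⟩ := (fs_bound ε hε (q.1 + q.2)).1
    obtain ⟨M, hM⟩ := (fs_compact ε).exists_bound_of_continuousOn
      (f := fun z => fsCoef L q.2 z.2 * fsCoef K q.1 z.1)
      (((hcc L q.2).comp continuous_snd).mul ((hcc K q.1).comp continuous_fst)).continuousOn
    refine ⟨|M| * C, by positivity, fun n hn z hz => ?_⟩
    have h1 := (hM z hz).trans (le_abs_self M)
    have h2 := hC n hn _ hz.2
    rw [Real.norm_eq_abs] at h1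
    change |_ * _| ≤ _
    rw [abs_mul, mul_assoc]
    exact mul_le_mul h1 h2 (abs_nonneg _) (abs_nonneg _)
  choose B hB0 hBn using hB
  let S := Finset.range (K + 1) ×ˢ Finset.range (L + 1)
  have hmem : (K, L) ∈ S := by simp [S]
  let D := ∑ q ∈ S, B q
  have hD0 : 0 ≤ D := Finset.sum_nonneg fun q _ => hB0 q
  let V := volume.real (goodSet ε)
  have hVfin : volume (goodSet ε) < ⊤ := (fs_compact ε).measure_lt_top
  have hV0 : 0 ≤ V := measureReal_nonneg
  have key : ∀ n : ℕ, 1 ≤ n →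
      ‖(π ^ 2 * (n : ℝ) ^ (2 * (K + L)))⁻¹ *
            (∫ z in goodSet ε, (mixedPartial K L (hFun n) z.1 z.2) ^ 2) -
          mainTermIntegral K L ε n‖ ≤ ((π ^ 2)⁻¹ * (2 * D ^ 2) * V) * (n : ℝ)⁻¹ := by
    intro n hn
    have hn1 : (1 : ℝ) ≤ n := by exact_mod_cast hn
    have hnpos : (0 : ℝ) < n := by linarith
    have hM : ∀ z : ℝ × ℝ, mixedPartial K L (hFun n) z.1 z.2 = ∑ q ∈ S, t n q z :=
      fun z => fs_mixed K L n z.1 z.2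
    have hN : ∀ z : ℝ × ℝ, (Polynomial.derivative^[K + L] (Polynomial.Chebyshev.T ℝ n)).eval
          ((Real.cos z.1 + Real.cos z.2) / 2) *
        (-Real.sin z.1 / 2) ^ K * (-Real.sin z.2 / 2) ^ L = t n (K, L) z := by
      intro z
      simp only [t, fsCoef_self]
      ring
    unfold mainTermIntegral
    simp only [hM, hN]
    have hi1 : IntegrableOn (fun z => (∑ q ∈ S, t n q z) ^ 2) (goodSet ε) :=
      ((continuous_finsetSum S (fun q _ => htc n q)).pow 2).continuousOn.integrableOn_compact
        (fs_compact ε)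
    have hi2 : IntegrableOn (fun z => (t n (K, L) z) ^ 2) (goodSet ε) :=
      ((htc n (K, L)).pow 2).continuousOn.integrableOn_compact (fs_compact ε)
    rw [← mul_sub, ← integral_sub hi1 hi2, norm_mul]
    have hpt : ∀ z ∈ goodSet ε, ‖(∑ q ∈ S, t n q z) ^ 2 - (t n (K, L) z) ^ 2‖ ≤
        2 * D ^ 2 * (n : ℝ) ^ (2 * (K + L)) * (n : ℝ)⁻¹ := by
      intro z hz
      have hqb : ∀ q ∈ S, |t n q z| ≤ B q * (n : ℝ) ^ (K + L) := by
        intro q hq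
        simp only [S, Finset.mem_product, Finset.mem_range] at hq
        refine (hBn q n hn z hz).trans ?_
        have := hB0 q
        gcongr
        · omega
        · omega
      have hqb' : ∀ q ∈ S.erase (K, L), n * |t n q z| ≤ B q * (n : ℝ) ^ (K + L) := by
        intro q hq
        rw [Finset.mem_erase] at hq
        obtain ⟨hne, hq⟩ := hq
        simp only [S, Finset.mem_product, Finset.mem_range] at hq
        have hlt : q.1 + q.2 + 1 ≤ K + L := by
          by_contra hcon
          exact hne (Prod.ext (by simp; omega) (by simp; omega))
        have h0 := hB0 q
        calc n * |t n q z| ≤ n * (B q * (n : ℝ) ^ (q.1 + q.2)) := by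
              gcongr; exact hBn q n hn z hz
          _ = B q * (n : ℝ) ^ (q.1 + q.2 + 1) := by ring
          _ ≤ _ := by gcongr
      have hMb : |∑ q ∈ S, t n q z| ≤ D * (n : ℝ) ^ (K + L) := by
        refine (Finset.abs_sum_le_sum_abs _ _).trans ?_
        rw [Finset.sum_mul]
        exact Finset.sum_le_sum hqb
      have hBD : B (K, L) ≤ D := Finset.single_le_sum (fun q _ => hB0 q) hmem
      have hNb : |t n (K, L) z| ≤ D * (n : ℝ) ^ (K + L) := by
        refine (hqb _ hmem).trans ?_
        gcongr
      have hdiff : ∑ q ∈ S, t n q z - t n (K, L) z = ∑ q ∈ S.erase (K, L), t n q z := by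
        rw [← Finset.add_sum_erase S _ hmem]; ring
      have hRb : n * |∑ q ∈ S, t n q z - t n (K, L) z| ≤ D * (n : ℝ) ^ (K + L) := by
        rw [hdiff]
        calc _ ≤ (n : ℝ) * ∑ q ∈ S.erase (K, L), |t n q z| := by
              gcongr; exact Finset.abs_sum_le_sum_abs _ _
          _ ≤ ∑ q ∈ S.erase (K, L), B q * (n : ℝ) ^ (K + L) := by
              rw [Finset.mul_sum]; exact Finset.sum_le_sum hqb'
          _ ≤ _ := by
              rw [← Finset.sum_mul]
              gcongr
              exact Finset.sum_le_sum_of_subset_of_nonneg (Finset.erase_subset _ _)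
                (fun q _ _ => hB0 q)
      rw [← div_eq_mul_inv, le_div_iff₀ hnpos, Real.norm_eq_abs, sq_sub_sq, abs_mul]
      have hsum := (abs_add_le (∑ q ∈ S, t n q z) (t n (K, L) z)).trans (add_le_add hMb hNb)
      calc _ = |∑ q ∈ S, t n q z + t n (K, L) z| *
              (n * |∑ q ∈ S, t n q z - t n (K, L) z|) := by ring
        _ ≤ (D * (n : ℝ) ^ (K + L) + D * (n : ℝ) ^ (K + L)) * (D * (n : ℝ) ^ (K + L)) :=
            mul_le_mul hsum hRb (by positivity) (by positivity)
        _ = _ := by ring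
    have hint := norm_setIntegral_le_of_norm_le_const hVfin hpt
    rw [Real.norm_of_nonneg (by positivity)]
    refine (mul_le_mul_of_nonneg_left hint (by positivity)).trans (le_of_eq ?_)
    have hp : (n : ℝ) ^ (2 * (K + L)) ≠ 0 := by positivity
    change _ * (_ * V) = _
    rw [mul_inv]
    field_simp
  have hlim : Tendsto (fun n : ℕ => ((π ^ 2)⁻¹ * (2 * D ^ 2) * V) * (n : ℝ)⁻¹) atTop (nhds 0) := by
    simpa using (tendsto_inv_atTop_nhds_zero_nat (𝕜 := ℝ)).const_mul ((π ^ 2)⁻¹ * (2 * D ^ 2) * V)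
  refine squeeze_zero_norm' ?_ hlim
  filter_upwards [eventually_ge_atTop 1] with n hn using key n hn
end

section
/- For every fixed θ ∈ (0,π) and every r ∈ ℕ, lim_{n→∞} ( ξ_r(n θ) − n^{−r} · T_n^{(r)}(cos θ) · (−sin θ)^r ) = 0, where ξ_r is the r-th derivative of cosine and T_n^{(r)} is the r-th derivative of the Chebyshev polynomial T_n. (Equivalently, n^{−r} d^r/dθ^r [T_n(cos θ)] − T_n^{(r)}(cos θ)(−sin θ)^r → 0.) -/
open Real Filter Polynomial

/-- comparison error -/
noncomputable def cmpErr (θ : ℝ) (r n : ℕ) : ℝ :=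
  iteratedDeriv r Real.cos (n * θ) -
          ((n : ℝ) ^ r)⁻¹ *
            ((Polynomial.derivative^[r] (Polynomial.Chebyshev.T ℝ n)).eval (Real.cos θ)) *
            (-Real.sin θ) ^ r

/-- for fixed `θ ∈ (0,π)` and `r ∈ ℕ`,
`lim_{n→∞} (ξ_r(nθ) − n^{−r} T_n^{(r)}(cos θ) (−sin θ)^r) = 0`,
where `ξ_r` is the `r`-th derivative of cosine and `T_n^{(r)}` the `r`-th derivative of the
Chebyshev polynomial `T_n`. -/
theorem deriv_comparison_tendsto_zero
    (θ : ℝ) (hθ : θ ∈ Set.Ioo 0 π) (r : ℕ) :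
    Filter.Tendsto (fun n : ℕ =>
        iteratedDeriv r Real.cos (n * θ) -
          ((n : ℝ) ^ r)⁻¹ *
            ((Polynomial.derivative^[r] (Polynomial.Chebyshev.T ℝ n)).eval (Real.cos θ)) *
            (-Real.sin θ) ^ r)
      Filter.atTop (nhds 0) := by
  obtain ⟨h0, h1⟩ := hθ
  have hs : Real.sin θ ≠ 0 := (Real.sin_pos_of_pos_of_lt_pi h0 h1).ne'
  have key : ∀ k : ℕ, Tendsto (fun n : ℕ => cmpErr θ k n) atTop (nhds 0) ∧
      Tendsto (fun n : ℕ => cmpErr θ (k + 1) n) atTop (nhds 0) := by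
    intro k
    induction k with
    | zero =>
      constructor
      · refine tendsto_const_nhds.congr fun n => ?_
        simp [cmpErr]
      · refine tendsto_const_nhds.congr fun n => ?_
        rcases Nat.eq_zero_or_pos n with rfl | hn
        · simp [cmpErr]
        · have hU := Polynomial.Chebyshev.U_real_cos θ ((n : ℤ) - 1)
          have hn' : (n : ℝ) ≠ 0 := by positivity
          push_cast at hU
          rw [sub_add_cancel] at hU
          simp [cmpErr, Polynomial.Chebyshev.T_derivative_eq_U, hU, hn']
    | succ k ih =>
      refine ⟨ih.2, ?_⟩
      have hinv : Tendsto (fun n : ℕ => ((n : ℝ))⁻¹) atTop (nhds 0) :=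
        tendsto_inv_atTop_zero.comp tendsto_natCast_atTop_atTop
      have hb : ∀ j : ℕ, Tendsto (fun n : ℕ => ((n : ℝ))⁻¹ *
          iteratedDeriv j Real.cos (n * θ)) atTop (nhds 0) := by
        intro j
        refine squeeze_zero_norm (fun n => ?_) hinv
        rw [norm_mul, Real.norm_eq_abs, Real.norm_eq_abs, abs_of_nonneg (by positivity : (0:ℝ) ≤ (n : ℝ)⁻¹)]
        exact mul_le_of_le_one_right (by positivity) (Real.abs_iteratedDeriv_cos_le_one _ _)
      have l1 := (hinv.mul ((hb k).sub (hinv.mul ih.1))).const_mul ((k : ℝ) ^ 2)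
      have l2 := ((hb (k + 1)).sub (hinv.mul ih.2)).const_mul
        ((2 * k + 1) * Real.cos θ / Real.sin θ)
      have l := (ih.1.neg.sub l1).add l2
      simp only [mul_zero, sub_zero, neg_zero, add_zero] at l
      refine l.congr' ?_
      filter_upwards [eventually_gt_atTop 0] with n hn
      have hn' : (n : ℝ) ≠ 0 := by positivity
      have hr := Polynomial.Chebyshev.one_sub_X_sq_mul_iterate_derivative_T_eval
        (n : ℤ) k (Real.cos θ)
      rw [show 1 - Real.cos θ ^ 2 = Real.sin θ ^ 2 by rw [Real.sin_sq]] at hr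
      have hx : iteratedDeriv (k + 2) Real.cos (n * θ) = - iteratedDeriv k Real.cos (n * θ) := by
        simp
      simp only [cmpErr]
      rw [show k + 1 + 1 = k + 2 from rfl, hx]
      generalize (derivative^[k + 2] (Chebyshev.T ℝ (n : ℤ))).eval (Real.cos θ) = A at *
      generalize (derivative^[k + 1] (Chebyshev.T ℝ (n : ℤ))).eval (Real.cos θ) = B at *
      generalize (derivative^[k] (Chebyshev.T ℝ (n : ℤ))).eval (Real.cos θ) = C at *
      generalize iteratedDeriv k Real.cos (n * θ) = x at *
      generalize iteratedDeriv (k + 1) Real.cos (n * θ) = y at *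
      push_cast at hr
      have e2 : ((n : ℝ) ^ (k + 2))⁻¹ * A * (-Real.sin θ) ^ (k + 2) =
          ((n : ℝ) ^ (k + 2))⁻¹ * (-Real.sin θ) ^ k * (Real.sin θ ^ 2 * A) := by ring
      rw [e2, hr]
      simp only [pow_succ]
      field_simp
      ring
  exact (key r).1
end

section
/- For every measurable function f : Ω → [0,∞], ∫_{[0,π]²} f(x, θ(x,y)) dx dy = ∫_{Ω} f(x,θ) · 2 sin θ / √(1 − (2 cos θ − cos x)²) dx dθ, where Ω = {(x,θ) ∈ [0,π]² : |2 cos θ − cos x| ≤ 1}. -/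
open Real MeasureTheory

/-- `Ω = {(x,θ) ∈ [0,π]² : |2 cos θ − cos x| ≤ 1}`. -/
def omegaSet : Set (ℝ × ℝ) :=
  {z | z ∈ Set.Icc (0 : ℝ) π ×ˢ Set.Icc (0 : ℝ) π ∧ |2 * Real.cos z.2 - Real.cos z.1| ≤ 1}

theorem slice_formula (x : ℝ) (F : ℝ → ENNReal) :
    (∫⁻ y in Set.Icc (0 : ℝ) π, F (Real.arccos ((Real.cos x + Real.cos y) / 2))) =
      ∫⁻ t in {t | t ∈ Set.Icc (0 : ℝ) π ∧ |2 * Real.cos t - Real.cos x| ≤ 1},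
        F t * ENNReal.ofReal
          (2 * Real.sin t / Real.sqrt (1 - (2 * Real.cos t - Real.cos x) ^ 2)) := by
  set T : Set ℝ := {t | t ∈ Set.Icc (0 : ℝ) π ∧ |2 * Real.cos t - Real.cos x| < 1} with hT
  have hTm : MeasurableSet T := by
    apply MeasurableSet.inter measurableSet_Icc
    exact measurableSet_lt (f := fun t : ℝ => |2 * Real.cos t - Real.cos x|) (g := fun _ => 1)
      (by fun_prop) (by fun_prop)
  have hae : ({t | t ∈ Set.Icc (0 : ℝ) π ∧ |2 * Real.cos t - Real.cos x| ≤ 1} : Set ℝ)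
      =ᵐ[volume] T := by
    have hfin : ({Real.arccos ((1 + Real.cos x) / 2), Real.arccos ((Real.cos x - 1) / 2)} :
        Set ℝ).Finite := by simp
    have h0 := (measure_eq_zero_iff_ae_notMem (μ := volume)).1 (hfin.measure_zero volume)
    filter_upwards [h0] with t ht
    apply propext
    constructor
    · rintro ⟨h1, h2⟩
      refine ⟨h1, lt_of_le_of_ne h2 fun h => ht ?_⟩
      have hc := Real.arccos_cos h1.1 h1.2
      rcases (abs_eq (by norm_num : (0 : ℝ) ≤ 1)).1 h with h | h
      · left
        rw [← hc]; congr 1; linarith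
      · right
        show t = _
        rw [← hc]; congr 1; linarith
    · rintro ⟨h1, h2⟩
      exact ⟨h1, h2.le⟩
  rw [setLIntegral_congr hae, ← setLIntegral_congr Ioo_ae_eq_Icc]
  have himg : (fun t => Real.arccos (2 * Real.cos t - Real.cos x)) '' T = Set.Ioo 0 π := by
    ext y
    constructor
    · rintro ⟨t, ⟨_, h2⟩, rfl⟩
      have := abs_lt.1 h2
      refine ⟨Real.arccos_pos.2 this.2, ?_⟩
      refine lt_of_le_of_ne (Real.arccos_le_pi _) fun h => ?_
      have := Real.arccos_eq_pi.1 h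
      linarith
    · rintro ⟨h1, h2⟩
      have hc : Real.cos (Real.arccos ((Real.cos x + Real.cos y) / 2))
          = (Real.cos x + Real.cos y) / 2 :=
        Real.cos_arccos (by linarith [Real.neg_one_le_cos x, Real.neg_one_le_cos y])
          (by linarith [Real.cos_le_one x, Real.cos_le_one y])
      have he : 2 * Real.cos (Real.arccos ((Real.cos x + Real.cos y) / 2)) - Real.cos x
          = Real.cos y := by rw [hc]; ring
      refine ⟨Real.arccos ((Real.cos x + Real.cos y) / 2),
        ⟨⟨Real.arccos_nonneg _, Real.arccos_le_pi _⟩, ?_⟩, ?_⟩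
      · rw [he, abs_lt]
        have hs := Real.sin_pos_of_pos_of_lt_pi h1 h2
        have := Real.sin_sq_add_cos_sq y
        constructor <;> nlinarith
      · show Real.arccos _ = y
        rw [he, Real.arccos_cos h1.le h2.le]
  have hder : ∀ t ∈ T, HasDerivWithinAt (fun t => Real.arccos (2 * Real.cos t - Real.cos x))
      (2 * Real.sin t / Real.sqrt (1 - (2 * Real.cos t - Real.cos x) ^ 2)) T t := by
    rintro t ⟨_, h2⟩
    have := abs_lt.1 h2
    have hA := Real.hasDerivAt_arccos (x := 2 * Real.cos t - Real.cos x)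
      (by linarith) (by linarith)
    have hB : HasDerivAt (fun t => 2 * Real.cos t - Real.cos x) (2 * (-Real.sin t)) t :=
      ((Real.hasDerivAt_cos t).const_mul 2).sub_const _
    have := (hA.comp t hB).hasDerivWithinAt (s := T)
    exact this.congr_deriv (by ring)
  have hinj : Set.InjOn (fun t => Real.arccos (2 * Real.cos t - Real.cos x)) T := by
    rintro s ⟨hs, hs'⟩ t ⟨ht, ht'⟩ h
    have a := abs_lt.1 hs'
    have b := abs_lt.1 ht'
    have := Real.arccos_injOn ⟨a.1.le, a.2.le⟩ ⟨b.1.le, b.2.le⟩ h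
    exact Real.injOn_cos hs ht (by linarith)
  rw [← himg, lintegral_image_eq_lintegral_abs_deriv_mul hTm hder hinj]
  refine setLIntegral_congr_fun hTm ?_
  rintro t ⟨h1, h2⟩
  have a := abs_lt.1 h2
  have hs := Real.sin_nonneg_of_nonneg_of_le_pi h1.1 h1.2
  show ENNReal.ofReal |_| * F (Real.arccos _) = _
  rw [abs_of_nonneg (by positivity), Real.cos_arccos a.1.le a.2.le, mul_comm]
  congr 2
  rw [show (Real.cos x + (2 * Real.cos t - Real.cos x)) / 2 = Real.cos t by ring,
    Real.arccos_cos h1.1 h1.2]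

/-- change of variables formula: for every measurable `f : Ω → [0,∞]`,
`∫_{[0,π]²} f(x, θ(x,y)) dx dy = ∫_Ω f(x,θ) · 2 sin θ / √(1 − (2cos θ − cos x)²) dx dθ`,
where `θ(x,y) = arccos((cos x + cos y)/2)`. -/
theorem change_of_variables_formula
    (f : ℝ × ℝ → ENNReal) (hf : Measurable f) :
    (∫⁻ z in Set.Icc (0 : ℝ) π ×ˢ Set.Icc (0 : ℝ) π,
        f (z.1, Real.arccos ((Real.cos z.1 + Real.cos z.2) / 2))) =
      ∫⁻ z in omegaSet,
        f z * ENNReal.ofReal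
          (2 * Real.sin z.2 / Real.sqrt (1 - (2 * Real.cos z.2 - Real.cos z.1) ^ 2)) := by
  have hΩ : MeasurableSet omegaSet := by
    apply MeasurableSet.inter (measurableSet_Icc.prod measurableSet_Icc)
    exact measurableSet_le (f := fun z : ℝ × ℝ => |2 * Real.cos z.2 - Real.cos z.1|)
      (g := fun _ => 1) (by fun_prop) (by fun_prop)
  have hS : MeasurableSet (Set.Icc (0 : ℝ) π ×ˢ Set.Icc (0 : ℝ) π) :=
    measurableSet_Icc.prod measurableSet_Icc
  have hac : Measurable Real.arccos := Real.continuous_arccos.measurable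
  rw [← lintegral_indicator hS, ← lintegral_indicator hΩ, Measure.volume_eq_prod,
    lintegral_prod _ ((Measurable.indicator (by fun_prop) hS).aemeasurable),
    lintegral_prod _ ((Measurable.indicator (by fun_prop) hΩ).aemeasurable)]
  refine lintegral_congr fun x => ?_
  by_cases hx : x ∈ Set.Icc (0 : ℝ) π
  · have hTm : MeasurableSet {t | t ∈ Set.Icc (0 : ℝ) π ∧ |2 * Real.cos t - Real.cos x| ≤ 1} := by
      apply MeasurableSet.inter measurableSet_Icc
      exact measurableSet_le (f := fun t : ℝ => |2 * Real.cos t - Real.cos x|)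
        (g := fun _ => 1) (by fun_prop) (by fun_prop)
    have h := slice_formula x (fun t => f (x, t))
    rw [← lintegral_indicator measurableSet_Icc, ← lintegral_indicator hTm] at h
    refine (lintegral_congr fun t => ?_).trans (h.trans (lintegral_congr fun t => ?_))
    · simp only [Set.indicator, Set.mem_prod, hx, true_and]
    · simp only [Set.indicator, omegaSet, Set.mem_ofPred_eq, Set.mem_prod, hx, true_and]
  · simp only [Set.indicator, omegaSet, Set.mem_ofPred_eq, Set.mem_prod, hx, false_and, if_false]
end
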